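/- arXiv:1904.01919 — 2 statements merged into one kernel-verified Lean document; each statement's English description precedes it below -/
import Mathlib

section
/- Suppose 1 < p < ∞, let p' be the conjugate exponent of p, and let g be holomorphic on the unit disc D. Then the multiplication operator M_g maps the Besov space B^p into the Bloch space 𝓑 if and only if g ∈ H^∞ ∩ 𝓑_{log,1/p'}. -/
open MeasureTheory Metric Complex Real Filter Set

noncomputable section

/-- `f` is holomorphic on the open unit disc. -/
def HolOn (f : ℂ → ℂ) : Prop := DifferentiableOn ℂ f (Metric.ball (0:ℂ) 1)

/-- The normalized Lebesgue area measure on `ℂ` (so the unit disc has total mass 1). -/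
def dA : Measure ℂ := (ENNReal.ofReal π)⁻¹ • volume

/-- Bounded holomorphic functions on the unit disc. -/
def Hinf : Set (ℂ → ℂ) :=
  {f | HolOn f ∧ ∃ C : ℝ, ∀ z ∈ Metric.ball (0:ℂ) 1, ‖f z‖ ≤ C}

/-- The Bloch space. -/
def Bloch : Set (ℂ → ℂ) :=
  {f | HolOn f ∧ ∃ C : ℝ, ∀ z ∈ Metric.ball (0:ℂ) 1,
      (1 - ‖z‖ ^ 2) * ‖deriv f z‖ ≤ C}

/-- The little Bloch space: `(1-|z|²)|f'(z)| → 0` as `|z| → 1⁻`. -/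
def littleBloch : Set (ℂ → ℂ) :=
  {f | HolOn f ∧ ∀ ε : ℝ, 0 < ε → ∃ r : ℝ, r < 1 ∧ ∀ z ∈ Metric.ball (0:ℂ) 1,
      r < ‖z‖ → (1 - ‖z‖ ^ 2) * ‖deriv f z‖ < ε}

/-- The `α`-logarithmic Bloch space. -/
def BlochLog (α : ℝ) : Set (ℂ → ℂ) :=
  {f | HolOn f ∧ ∃ C : ℝ, ∀ z ∈ Metric.ball (0:ℂ) 1,
      (1 - ‖z‖ ^ 2) * (Real.log (2 / (1 - ‖z‖ ^ 2))) ^ α *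
        ‖deriv f z‖ ≤ C}

/-- The Besov space `B¹`: holomorphic `f` with `∫_D |f''| dA < ∞`. -/
def Besov1 : Set (ℂ → ℂ) :=
  {f | HolOn f ∧ ∫⁻ z in Metric.ball (0:ℂ) 1,
      ENNReal.ofReal (‖deriv (deriv f) z‖) ∂dA < ⊤}

/-- The Besov space `Bᵖ` (`1 < p < ∞`): `∫_D (1-|z|)^(p-2) |f'(z)|^p dA(z) < ∞`. -/
def Besov (p : ℝ) : Set (ℂ → ℂ) :=
  {f | HolOn f ∧ ∫⁻ z in Metric.ball (0:ℂ) 1,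
      ENNReal.ofReal ((1 - ‖z‖) ^ (p - 2) * ‖deriv f z‖ ^ p) ∂dA < ⊤}

open scoped Classical in
/-- The Besov space `Bᵖ` for all `1 ≤ p < ∞` (with the special definition at `p = 1`). -/
def BesovFull (p : ℝ) : Set (ℂ → ℂ) := if p = 1 then Besov1 else Besov p

/-- The Möbius transformation `φ_a(z) = (a-z)/(1 - conj a · z)`. -/
def phi (a z : ℂ) : ℂ := (a - z) / (1 - (starRingEnd ℂ) a * z)

/-- The space `Q_s`. -/
def Qs (s : ℝ) : Set (ℂ → ℂ) :=
  {f | HolOn f ∧ ⨆ a ∈ Metric.ball (0:ℂ) 1, ∫⁻ z in Metric.ball (0:ℂ) 1,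
      ENNReal.ofReal (‖deriv f z‖ ^ 2 *
        (1 - ‖phi a z‖ ^ 2) ^ s) ∂dA < ⊤}

/-- The space `Q_{s,log,α}`. -/
def QsLog (s α : ℝ) : Set (ℂ → ℂ) :=
  {f | HolOn f ∧ ⨆ a ∈ Metric.ball (0:ℂ) 1,
      (ENNReal.ofReal ((Real.log (2 / (1 - ‖a‖))) ^ (2 * α)) *
        ∫⁻ z in Metric.ball (0:ℂ) 1,
          ENNReal.ofReal (‖deriv f z‖ ^ 2 *
            (1 - ‖phi a z‖ ^ 2) ^ s) ∂dA) < ⊤}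

/-- The Volterra operator `T_g(f)(z) = ∫_0^z g'(ξ) f(ξ) dξ` (along the segment from 0 to z). -/
def Tg (g f : ℂ → ℂ) : ℂ → ℂ :=
  fun z => z * ∫ t in (0:ℝ)..1, deriv g ((t : ℂ) * z) * f ((t : ℂ) * z)

/-- The companion operator `I_g(f)(z) = ∫_0^z g(ξ) f'(ξ) dξ` (along the segment from 0 to z). -/
def Ig (g f : ℂ → ℂ) : ℂ → ℂ :=
  fun z => z * ∫ t in (0:ℝ)..1, g ((t : ℂ) * z) * deriv f ((t : ℂ) * z)

/-- The multiplication operator `M_g(f) = g · f`. -/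
def Mg (g f : ℂ → ℂ) : ℂ → ℂ := fun z => g z * f z

/-- `T` maps `X` into `Y`. -/
def MapsInto (T : (ℂ → ℂ) → (ℂ → ℂ)) (X Y : Set (ℂ → ℂ)) : Prop :=
  ∀ f ∈ X, T f ∈ Y

/-- The Hardy space `H^q`. -/
def Hardy (q : ℝ) : Set (ℂ → ℂ) :=
  {f | HolOn f ∧ ∃ C : ℝ, ∀ r : ℝ, 0 < r → r < 1 →
      (1 / (2 * π)) * ∫ t in (0:ℝ)..(2 * π),
        ‖f ((r : ℂ) * Complex.exp ((t : ℂ) * Complex.I))‖ ^ q ≤ C}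

/-- An inner function: bounded holomorphic with radial boundary values of modulus 1 a.e. -/
def IsInner (g : ℂ → ℂ) : Prop :=
  g ∈ Hinf ∧ ∀ᵐ t : ℝ ∂(volume.restrict (Set.Ioc (0:ℝ) (2 * π))),
    Filter.Tendsto (fun r : ℝ => ‖g ((r : ℂ) * Complex.exp ((t : ℂ) * Complex.I))‖)
      (nhdsWithin 1 (Set.Iio 1)) (nhds 1)

/-- `X` has the f-property (division by inner functions). -/
def FProperty (X : Set (ℂ → ℂ)) : Prop :=
  ∀ h ∈ X, ∀ g : ℂ → ℂ, IsInner g →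
    (fun z => h z / g z) ∈ Hardy 1 → (fun z => h z / g z) ∈ X

/-- The space of multipliers `M(X,Y)`. -/
def Mult (X Y : Set (ℂ → ℂ)) : Set (ℂ → ℂ) :=
  {g | HolOn g ∧ ∀ f ∈ X, (fun z => g z * f z) ∈ Y}

end

lemma polar_lint (G : ℂ → ENNReal) (hG : Measurable G) :
    ∫⁻ u, G u = ∫⁻ ρ in Ioi (0:ℝ), ∫⁻ θ in Ioo (-π) π,
      ENNReal.ofReal ρ * G (ρ * Complex.exp (θ * Complex.I)) := by
  rw [← Complex.lintegral_comp_polarCoord_symm, polarCoord_target,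
    Measure.volume_eq_prod, ← Measure.prod_restrict]
  rw [lintegral_prod]
  · simp only [Complex.polarCoord_symm_apply, smul_eq_mul]
    congr 1
    ext ρ
    congr 1
    ext θ
    rw [Complex.exp_mul_I]
    norm_cast
  · apply Measurable.aemeasurable
    simp only [Complex.polarCoord_symm_apply, smul_eq_mul]
    apply Measurable.mul (by fun_prop)
    apply hG.comp
    fun_prop

lemma circ_mean (h : ℂ → ℂ) (hh : HolOn h) (z : ℂ) (ρ : ℝ) (hρ : 0 < ρ)
    (hs : closedBall z ρ ⊆ ball (0:ℂ) 1) :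
    ‖h z‖ₑ * ENNReal.ofReal (2 * π) ≤
      ∫⁻ θ in Ioo (-π) π, ‖h (z + ρ * Complex.exp (θ * Complex.I))‖ₑ := by
  have h1 : circleAverage h z ρ = h z := by
    apply DiffContOnCl.circleAverage
    rw [abs_of_pos hρ]
    apply DifferentiableOn.diffContOnCl
    exact hh.mono ((closure_ball_subset_closedBall).trans hs)
  have h2 : h z = (2 * π)⁻¹ • ∫ θ in (-π)..π, h (circleMap z ρ θ) := by
    rw [← h1, circleAverage_def]
    congr 1
    have hper : Function.Periodic (fun θ => h (circleMap z ρ θ)) (2 * π) :=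
      fun θ => by simp [periodic_circleMap z ρ θ]
    have := hper.intervalIntegral_add_eq 0 (-π)
    rw [zero_add] at this
    rw [this]
    congr 1
    ring
  have h3 : ‖h z‖ₑ * ENNReal.ofReal (2 * π) = ‖∫ θ in (-π)..π, h (circleMap z ρ θ)‖ₑ := by
    have : ∫ θ in (-π)..π, h (circleMap z ρ θ) = (2 * π : ℝ) • h z := by
      rw [h2, smul_smul, mul_inv_cancel₀ (by positivity), one_smul]
    rw [this, enorm_smul, mul_comm]
    congr 1
    rw [Real.enorm_eq_ofReal (by positivity)]
  rw [h3, intervalIntegral.integral_of_le (by linarith [Real.pi_pos]), integral_Ioc_eq_integral_Ioo]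
  exact enorm_integral_le_lintegral_enorm _

lemma submean1 (h : ℂ → ℂ) (hh : HolOn h) (z : ℂ) (r : ℝ) (hr : 0 < r)
    (hs : ball z r ⊆ ball (0:ℂ) 1) :
    ‖h z‖ₑ * ENNReal.ofReal (π * r ^ 2) ≤ ∫⁻ u in ball z r, ‖h u‖ₑ := by
  classical
  set G : ℂ → ENNReal := (ball (0:ℂ) r).indicator (fun u => ‖h (z + u)‖ₑ) with hG
  have hmap : ∀ u ∈ ball (0:ℂ) r, z + u ∈ ball z r := by
    intro u hu
    simpa using hu
  have hGm : Measurable G := by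
    have : G = (ball (0:ℂ) r).piecewise (fun u => ‖h (z + u)‖ₑ) (fun _ => 0) := by
      ext u; simp [hG, indicator, piecewise]
    rw [this]
    apply ContinuousOn.measurable_piecewise _ continuousOn_const measurableSet_ball
    apply continuous_enorm.comp_continuousOn
    apply hh.continuousOn.comp (by fun_prop)
    intro u hu
    exact hs (hmap u hu)
  have e1 : ∫⁻ u in ball z r, ‖h u‖ₑ = ∫⁻ u, G u := by
    rw [← lintegral_indicator measurableSet_ball, ← lintegral_add_left_eq_self _ z]
    congr 1
    ext u
    simp [hG, indicator]
  rw [e1, polar_lint G hGm]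
  have e2 : ∫⁻ ρ in Ioo (0:ℝ) r, ENNReal.ofReal ρ = ENNReal.ofReal (r ^ 2 / 2) := by
    rw [← ofReal_integral_eq_lintegral_ofReal]
    · rw [← integral_Ioc_eq_integral_Ioo, ← intervalIntegral.integral_of_le hr.le]
      simp
    · apply (continuous_id.integrableOn_Icc (a := 0) (b := r)).mono_set Ioo_subset_Icc_self
    · filter_upwards [ae_restrict_mem measurableSet_Ioo] with x hx using hx.1.le
  calc ‖h z‖ₑ * ENNReal.ofReal (π * r ^ 2)
      = ∫⁻ ρ in Ioo (0:ℝ) r, (‖h z‖ₑ * ENNReal.ofReal (2 * π)) * ENNReal.ofReal ρ := by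
        rw [lintegral_const_mul _ (by fun_prop), e2, mul_assoc, ← ENNReal.ofReal_mul (by positivity)]
        congr 2
        ring
    _ ≤ ∫⁻ ρ in Ioo (0:ℝ) r, ∫⁻ θ in Ioo (-π) π,
        ENNReal.ofReal ρ * G (ρ * Complex.exp (θ * Complex.I)) := by
        apply setLIntegral_mono' measurableSet_Ioo
        intro ρ hρ
        rw [lintegral_const_mul _ (by fun_prop), mul_comm]
        refine mul_le_mul_right ?_ _
        refine (circ_mean h hh z ρ hρ.1 ?_).trans ?_
        · exact (closedBall_subset_ball hρ.2).trans hs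
        · apply le_of_eq
          congr 1
          ext θ
          rw [hG, indicator_of_mem]
          simp [abs_of_pos hρ.1, hρ.2, Complex.norm_exp_ofReal_mul_I]
    _ ≤ _ := lintegral_mono_set Ioo_subset_Ioi_self

lemma submeanp (p : ℝ) (hp : 1 < p) (h : ℂ → ℂ) (hh : HolOn h) (z : ℂ) (r : ℝ) (hr : 0 < r)
    (hs : ball z r ⊆ ball (0:ℂ) 1) :
    ‖h z‖ₑ ^ p * ENNReal.ofReal (π * r ^ 2) ≤ ∫⁻ u in ball z r, ‖h u‖ₑ ^ p := by
  have hpq : p.HolderConjugate (Real.conjExponent p) := Real.HolderConjugate.conjExponent hp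
  set q := Real.conjExponent p
  set V := ENNReal.ofReal (π * r ^ 2) with hV
  have hV0 : V ≠ 0 := by
    have := Real.pi_pos
    rw [hV]; simp; positivity
  have hVt : V ≠ ⊤ := ENNReal.ofReal_ne_top
  have hvol : volume (ball z r) = V := by
    rw [Complex.volume_ball, hV, ENNReal.ofReal_mul (by positivity), mul_comm, ENNReal.ofReal_pow hr.le]
    congr 1
    exact (ENNReal.ofReal_coe_nnreal (p := NNReal.pi)).symm
  have hm : AEMeasurable (fun u => ‖h u‖ₑ) (volume.restrict (ball z r)) := by
    apply ContinuousOn.aemeasurable _ measurableSet_ball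
    exact continuous_enorm.comp_continuousOn (hh.continuousOn.mono hs)
  have h1 := submean1 h hh z r hr hs
  have h2 := ENNReal.lintegral_mul_le_Lp_mul_Lq (volume.restrict (ball z r)) hpq hm
    (aemeasurable_const (b := (1:ENNReal)))
  simp only [Pi.mul_apply, mul_one, ENNReal.one_rpow, lintegral_const, one_mul,
    Measure.restrict_apply MeasurableSet.univ, univ_inter, hvol] at h2
  have h3 := ENNReal.rpow_le_rpow (h1.trans h2) (by linarith : 0 ≤ p)
  rw [ENNReal.mul_rpow_of_nonneg _ _ (by linarith), ENNReal.mul_rpow_of_nonneg _ _ (by linarith),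
    ← ENNReal.rpow_mul, ← ENNReal.rpow_mul, one_div_mul_cancel (by linarith), ENNReal.rpow_one] at h3
  have h4 : V ^ p = V * V ^ (1 / q * p) := by
    conv_rhs => rw [← ENNReal.rpow_one V, ← ENNReal.rpow_mul, one_mul, ← ENNReal.rpow_add _ _ hV0 hVt]
    congr 1
    have := hpq.inv_add_inv_eq_one
    have hp0 : p ≠ 0 := by linarith
    field_simp at this ⊢
    linarith [this]
  rw [h4, ← mul_assoc] at h3
  exact (ENNReal.mul_le_mul_iff_left (by simp [hV0, hVt]) (by simp [hV0, hVt])).1 h3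

/-- The Besov density. -/
noncomputable def bdens (p : ℝ) (f : ℂ → ℂ) (u : ℂ) : ENNReal :=
  ENNReal.ofReal ((1 - ‖u‖) ^ (p - 2) * ‖deriv f u‖ ^ p)

lemma hol_deriv (f : ℂ → ℂ) (hf : HolOn f) : HolOn (deriv f) :=
  DifferentiableOn.deriv hf isOpen_ball

lemma besov_iff (p : ℝ) (f : ℂ → ℂ) :
    f ∈ Besov p ↔ HolOn f ∧ ∫⁻ z in ball (0:ℂ) 1, bdens p f z < ⊤ := by
  unfold Besov bdens dA
  simp only [mem_ofPred_eq, Measure.restrict_smul, lintegral_smul_measure, smul_eq_mul]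
  refine and_congr_right fun _ => ?_
  have h0 : (ENNReal.ofReal π)⁻¹ ≠ 0 := by simp
  have h1 : (ENNReal.ofReal π)⁻¹ ≠ ⊤ := by simp [Real.pi_pos]
  constructor
  · intro h
    by_contra hc
    rw [not_lt, top_le_iff] at hc
    rw [hc, ENNReal.mul_top h0] at h
    exact lt_irrefl _ h
  · intro h
    exact ENNReal.mul_lt_top (lt_top_iff_ne_top.2 h1) h

lemma bdens_aem (p : ℝ) (f : ℂ → ℂ) (hf : HolOn f) :
    AEMeasurable (bdens p f) (volume.restrict (ball (0:ℂ) 1)) := by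
  unfold bdens
  apply AEMeasurable.ennreal_ofReal
  apply AEMeasurable.mul
  · apply Measurable.aemeasurable
    fun_prop
  · apply AEMeasurable.pow_const
    apply ContinuousOn.aemeasurable _ measurableSet_ball
    exact ((hol_deriv f hf).continuousOn).norm

lemma local_bound (p : ℝ) (hp : 1 < p) : ∃ C : ℝ, 0 < C ∧ ∀ f, HolOn f → ∀ z ∈ ball (0:ℂ) 1,
    ENNReal.ofReal ((1 - ‖z‖) ^ p * ‖deriv f z‖ ^ p) ≤
      ENNReal.ofReal C * ∫⁻ u in ball z ((1 - ‖z‖) / 2), bdens p f u := by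
  set c : ℝ := min ((1/2) ^ (p-2)) ((3/2) ^ (p-2)) with hc
  have hc0 : 0 < c := lt_min (by positivity) (by positivity)
  have hx : ∀ x : ℝ, 1/2 ≤ x → x ≤ 3/2 → c ≤ x ^ (p-2) := by
    intro x h1 h2
    rcases le_total 2 p with h | h
    · exact (min_le_left _ _).trans (Real.rpow_le_rpow (by norm_num) h1 (by linarith))
    · exact (min_le_right _ _).trans
        (Real.rpow_le_rpow_of_nonpos (by linarith) h2 (by linarith))
  have hpi := Real.pi_pos
  refine ⟨4 / (π * c), by positivity, fun f hf z hz => ?_⟩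
  have hz1 : ‖z‖ < 1 := by simpa using hz
  set s := 1 - ‖z‖ with hs
  have hs0 : 0 < s := by linarith
  have hnear : ∀ u ∈ ball z (s/2), 1/2 * s ≤ 1 - ‖u‖ ∧ 1 - ‖u‖ ≤ 3/2 * s := by
    intro u hu
    rw [mem_ball, dist_eq_norm] at hu
    have := (abs_le.1 (abs_norm_sub_norm_le u z))
    constructor <;> linarith [this.1, this.2]
  have hsub : ball z (s/2) ⊆ ball (0:ℂ) 1 := by
    intro u hu
    have := (hnear u hu).1
    simp only [mem_ball, dist_zero_right]
    linarith
  have h1 := submeanp p hp (deriv f) (hol_deriv f hf) z (s/2) (by positivity) hsub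
  have h2 : ENNReal.ofReal (c * s ^ (p-2)) * ∫⁻ u in ball z (s/2), ‖deriv f u‖ₑ ^ p ≤
      ∫⁻ u in ball z (s/2), bdens p f u := by
    rw [← lintegral_const_mul' _ _ ENNReal.ofReal_ne_top]
    apply setLIntegral_mono' measurableSet_ball
    intro u hu
    rw [← ofReal_norm, ENNReal.ofReal_rpow_of_nonneg (norm_nonneg _) (by linarith),
      ← ENNReal.ofReal_mul (by positivity)]
    apply ENNReal.ofReal_le_ofReal
    apply mul_le_mul_of_nonneg_right _ (by positivity)
    have hu2 := hnear u hu
    have := hx ((1 - ‖u‖) / s) (by rw [le_div_iff₀ hs0]; exact hu2.1)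
      (by rw [div_le_iff₀ hs0]; exact hu2.2)
    rw [Real.div_rpow (by linarith [hu2.1]) hs0.le, le_div_iff₀ (by positivity)] at this
    exact this
  calc ENNReal.ofReal (s ^ p * ‖deriv f z‖ ^ p)
      = ENNReal.ofReal (4 / (π * c)) * (ENNReal.ofReal (c * s ^ (p-2)) *
        (‖deriv f z‖ₑ ^ p * ENNReal.ofReal (π * (s/2) ^ 2))) := by
        rw [← ofReal_norm, ENNReal.ofReal_rpow_of_nonneg (norm_nonneg _) (by linarith),
          ← ENNReal.ofReal_mul (by positivity), ← ENNReal.ofReal_mul (by positivity),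
          ← ENNReal.ofReal_mul (by positivity)]
        congr 1
        have : s ^ p = s ^ (p - 2) * s ^ 2 := by
          rw [← Real.rpow_natCast, ← Real.rpow_add hs0]; congr 1; push_cast; ring
        rw [this]
        field_simp
        ring
    _ ≤ _ := by
        refine mul_le_mul_right ((mul_le_mul_right h1 _).trans h2) _

lemma besov_bloch (p : ℝ) (hp : 1 < p) (f : ℂ → ℂ) (hf : f ∈ Besov p) : f ∈ Bloch := by
  rw [besov_iff] at hf
  obtain ⟨C, hC, h⟩ := local_bound p hp
  refine ⟨hf.1, ?_⟩
  set W := ∫⁻ z in ball (0:ℂ) 1, bdens p f z with hW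
  have hfin : ENNReal.ofReal C * W ≠ ⊤ := ENNReal.mul_ne_top ENNReal.ofReal_ne_top hf.2.ne
  refine ⟨2 * (ENNReal.ofReal C * W).toReal ^ (1/p), fun z hz => ?_⟩
  have hz1 : ‖z‖ < 1 := by simpa using hz
  have h1 := (h f hf.1 z hz).trans (mul_le_mul_right (lintegral_mono_set (t := ball (0:ℂ) 1) (by
    intro u hu
    rw [mem_ball, dist_eq_norm] at hu
    have := (abs_le.1 (abs_norm_sub_norm_le u z))
    simp only [mem_ball, dist_zero_right]
    linarith [this.2])) _)
  rw [ENNReal.ofReal_le_iff_le_toReal hfin, ← Real.mul_rpow (by linarith) (norm_nonneg _)] at h1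
  have h2 := Real.rpow_le_rpow (by have : 0 ≤ 1 - ‖z‖ := by linarith
                                   positivity) h1 (by positivity : 0 ≤ 1/p)
  rw [← Real.rpow_mul (mul_nonneg (by linarith) (norm_nonneg _)), mul_one_div_cancel (by linarith),
    Real.rpow_one] at h2
  have h3 : (1 - ‖z‖ ^ 2) * ‖deriv f z‖ ≤ 2 * ((1 - ‖z‖) * ‖deriv f z‖) := by
    have : (1 - ‖z‖ ^ 2) ≤ 2 * (1 - ‖z‖) := by nlinarith [norm_nonneg z]
    nlinarith [norm_nonneg (deriv f z)]
  linarith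

lemma radial_int (p : ℝ) (hp : 1 < p) : ∃ C : ℝ, 0 < C ∧ ∀ f, HolOn f → ∀ ζ : ℂ, ‖ζ‖ = 1 →
    ∀ R : ℝ, R < 1 → ∫⁻ t in Ioo 0 R, ENNReal.ofReal ((1 - t) ^ (p - 1) * ‖deriv f (t * ζ)‖ ^ p) ≤
      ENNReal.ofReal C * ∫⁻ u in ball (0:ℂ) 1, bdens p f u := by
  obtain ⟨C, hC, h⟩ := local_bound p hp
  refine ⟨C * 3, by positivity, fun f hf ζ hζ R hR => ?_⟩
  set S : Set (ℝ × ℂ) := {x | ‖x.2 - x.1 * ζ‖ < (1 - x.1) / 2} with hS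
  have hSm : MeasurableSet S := by
    apply IsOpen.measurableSet
    apply isOpen_lt <;> fun_prop
  set k : ℝ → ℂ → ENNReal := fun t u => ENNReal.ofReal ((1 - t)⁻¹) * S.indicator 1 (t, u) with hk
  have hkm : Measurable (Function.uncurry k) := by
    have : Function.uncurry k = fun x => ENNReal.ofReal ((1 - x.1)⁻¹) * S.indicator 1 x := by
      ext ⟨t, u⟩; rfl
    rw [this]
    apply Measurable.mul (by fun_prop)
    exact (measurable_one).indicator hSm
  have step1 : ∀ t ∈ Ioo 0 R, ENNReal.ofReal ((1 - t) ^ (p - 1) * ‖deriv f (t * ζ)‖ ^ p) ≤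
      ENNReal.ofReal C * ∫⁻ u in ball (0:ℂ) 1, k t u * bdens p f u := by
    intro t ht
    have ht1 : 0 < 1 - t := by linarith [ht.2]
    have hn : ‖(t:ℂ) * ζ‖ = t := by rw [norm_mul, hζ, mul_one, Complex.norm_real, Real.norm_of_nonneg ht.1.le]
    have h1 := h f hf (t * ζ) (by simp only [mem_ball, dist_zero_right, hn]; linarith)
    rw [hn] at h1
    have e : (1 - t) ^ (p - 1) * ‖deriv f (t * ζ)‖ ^ p =
      (1 - t)⁻¹ * ((1 - t) ^ p * ‖deriv f (t * ζ)‖ ^ p) := by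
      rw [Real.rpow_sub_one ht1.ne']; ring
    rw [e, ENNReal.ofReal_mul (by positivity)]
    refine (mul_le_mul_right h1 _).trans ?_
    rw [mul_left_comm]
    refine mul_le_mul_right ?_ _
    rw [← lintegral_const_mul' _ _ ENNReal.ofReal_ne_top, ← lintegral_indicator measurableSet_ball,
      ← lintegral_indicator measurableSet_ball]
    apply lintegral_mono
    intro u
    by_cases hu : u ∈ ball ((t:ℂ) * ζ) ((1 - t) / 2)
    · have hu1 : u ∈ ball (0:ℂ) 1 := by
        rw [mem_ball, dist_eq_norm] at hu
        have := (abs_le.1 (abs_norm_sub_norm_le u (t*ζ)))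
        simp only [mem_ball, dist_zero_right]
        linarith [this.2]
      rw [indicator_of_mem hu, indicator_of_mem hu1]
      have : (t, u) ∈ S := by rw [mem_ball, dist_eq_norm] at hu; exact hu
      simp [hk, this]
    · rw [indicator_of_notMem hu]; exact zero_le
  calc ∫⁻ t in Ioo 0 R, ENNReal.ofReal ((1 - t) ^ (p - 1) * ‖deriv f (t * ζ)‖ ^ p)
      ≤ ∫⁻ t in Ioo 0 R, ENNReal.ofReal C * ∫⁻ u in ball (0:ℂ) 1, k t u * bdens p f u :=
        setLIntegral_mono' measurableSet_Ioo step1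
    _ = ENNReal.ofReal C * ∫⁻ t in Ioo 0 R, ∫⁻ u in ball (0:ℂ) 1, k t u * bdens p f u := by
        rw [lintegral_const_mul' _ _ ENNReal.ofReal_ne_top]
    _ = ENNReal.ofReal C * ∫⁻ u in ball (0:ℂ) 1, ∫⁻ t in Ioo 0 R, k t u * bdens p f u := by
        rw [lintegral_lintegral_swap]
        apply AEMeasurable.mul hkm.aemeasurable
        exact (bdens_aem p f hf).comp_snd
    _ ≤ ENNReal.ofReal C * ∫⁻ u in ball (0:ℂ) 1, ENNReal.ofReal 3 * bdens p f u := by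
        refine mul_le_mul_right ?_ _
        apply setLIntegral_mono' measurableSet_ball
        intro u hu
        have hu1 : ‖u‖ < 1 := by simpa using hu
        rw [lintegral_mul_const' _ _ (by unfold bdens; exact ENNReal.ofReal_ne_top)]
        refine mul_le_mul_left ?_ _
        have hs0 : 0 < 1 - ‖u‖ := by linarith
        calc ∫⁻ t in Ioo 0 R, k t u ≤ ∫⁻ t in Ioo 0 R,
              (Ioo (1 - 2 * (1 - ‖u‖)) 1).indicator
                (fun _ => ENNReal.ofReal ((3/2) / (1 - ‖u‖))) t := by
              apply setLIntegral_mono' measurableSet_Ioo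
              intro t ht
              have ht1 : 0 < 1 - t := by linarith [ht.2]
              by_cases hm : (t, u) ∈ S
              · have hm' : ‖u - t * ζ‖ < (1 - t) / 2 := hm
                have hn : ‖(t:ℂ) * ζ‖ = t := by
                  rw [norm_mul, hζ, mul_one, Complex.norm_real, Real.norm_of_nonneg ht.1.le]
                have := (abs_le.1 (abs_norm_sub_norm_le u (t*ζ)))
                rw [hn] at this
                rw [indicator_of_mem (by constructor <;> linarith [this.1, this.2])]
                simp only [hk, indicator_of_mem hm, Pi.one_apply, mul_one]
                apply ENNReal.ofReal_le_ofReal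
                rw [inv_eq_one_div, div_le_div_iff₀ ht1 hs0]
                linarith [this.1]
              · simp [hk, hm]
          _ ≤ ∫⁻ t, (Ioo (1 - 2 * (1 - ‖u‖)) 1).indicator
                (fun _ => ENNReal.ofReal ((3/2) / (1 - ‖u‖))) t := setLIntegral_le_lintegral _ _
          _ = ENNReal.ofReal 3 := by
              rw [lintegral_indicator measurableSet_Ioo, setLIntegral_const, Real.volume_Ioo,
                ← ENNReal.ofReal_mul (by positivity)]
              congr 1
              field_simp
              ring
    _ = _ := by
        rw [lintegral_const_mul' _ _ ENNReal.ofReal_ne_top, ← mul_assoc,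
          ← ENNReal.ofReal_mul hC.le]

lemma growth_aux (p : ℝ) (hp : 1 < p) (f : ℂ → ℂ) (hf : f ∈ Besov p) :
    ∃ K : ℝ, 0 ≤ K ∧ ∀ ζ : ℂ, ‖ζ‖ = 1 → ∀ R : ℝ, 0 ≤ R → R < 1 →
      ‖f (R * ζ) - f 0‖ ≤ K * (- Real.log (1 - R)) ^ (1 - 1 / p) := by
  obtain ⟨C, hC, h⟩ := radial_int p hp
  rw [besov_iff] at hf
  obtain ⟨hf, hfin⟩ := hf
  set W := ∫⁻ z in ball (0:ℂ) 1, bdens p f z with hW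
  have hp0 : 0 < p := by linarith
  have hfin' : (ENNReal.ofReal C * W) ^ (1/p) ≠ ⊤ :=
    ENNReal.rpow_ne_top_of_nonneg (by positivity) (ENNReal.mul_ne_top ENNReal.ofReal_ne_top hfin.ne)
  refine ⟨((ENNReal.ofReal C * W) ^ (1/p)).toReal, ENNReal.toReal_nonneg, fun ζ hζ R hR0 hR => ?_⟩
  have hpq : p.HolderConjugate (Real.conjExponent p) := Real.HolderConjugate.conjExponent hp
  set q := Real.conjExponent p with hq
  have hq1 : 1 / q = 1 - 1 / p := by
    have := hpq.inv_add_inv_eq_one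
    rw [one_div, one_div]; linarith
  have hq0 : 0 < q := hpq.symm.pos
  have hin : ∀ t ∈ Icc 0 R, (t:ℂ) * ζ ∈ ball (0:ℂ) 1 := by
    intro t ht
    simp only [mem_ball, dist_zero_right, norm_mul, hζ, mul_one, Complex.norm_real,
      Real.norm_of_nonneg ht.1]
    linarith [ht.2]
  have hcont : ContinuousOn (fun t : ℝ => deriv f (t * ζ)) (Icc 0 R) :=
    (hol_deriv f hf).continuousOn.comp (by fun_prop) hin
  have ftc : ∫ t in (0:ℝ)..R, deriv f (t * ζ) * ζ = f (R * ζ) - f 0 := by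
    have := intervalIntegral.integral_eq_sub_of_hasDerivAt (a := 0) (b := R)
      (f := fun t : ℝ => f (t * ζ)) (f' := fun t => deriv f (t * ζ) * ζ) ?_ ?_
    · simpa using this
    · intro t ht
      rw [uIcc_of_le hR0] at ht
      have hd : HasDerivAt f (deriv f (t * ζ)) (t * ζ) :=
        ((hf _ (hin t ht)).differentiableAt (isOpen_ball.mem_nhds (hin t ht))).hasDerivAt
      have hl : HasDerivAt (fun t : ℝ => (t : ℂ) * ζ) ζ t := by
        simpa using (Complex.ofRealCLM.hasDerivAt (x := t)).mul_const ζ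
      exact hd.comp t hl
    · apply ContinuousOn.intervalIntegrable
      rw [uIcc_of_le hR0]
      exact hcont.mul continuousOn_const
  have e1 : ‖f (R * ζ) - f 0‖ₑ ≤ ∫⁻ t in Ioo 0 R, ‖deriv f (t * ζ)‖ₑ := by
    rw [← ftc, intervalIntegral.integral_of_le hR0, integral_Ioc_eq_integral_Ioo]
    refine (enorm_integral_le_lintegral_enorm _).trans (le_of_eq ?_)
    congr 1
    ext t
    rw [enorm_mul]
    have : ‖ζ‖ₑ = 1 := by rw [← ofReal_norm, hζ]; simp
    rw [this, mul_one]
  set A : ℝ → ENNReal := fun t => ENNReal.ofReal ((1 - t) ^ ((p-1)/p) * ‖deriv f (t * ζ)‖) with hA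
  set B : ℝ → ENNReal := fun t => ENNReal.ofReal ((1 - t) ^ (-((p-1)/p))) with hB
  have hAm : AEMeasurable A (volume.restrict (Ioo 0 R)) := by
    apply AEMeasurable.ennreal_ofReal
    apply AEMeasurable.mul
    · apply Measurable.aemeasurable
      fun_prop
    · apply ContinuousOn.aemeasurable _ measurableSet_Ioo
      exact (hcont.mono Ioo_subset_Icc_self).norm
  have hBm : AEMeasurable B (volume.restrict (Ioo 0 R)) := by
    apply Measurable.aemeasurable
    fun_prop
  have hold := ENNReal.lintegral_mul_le_Lp_mul_Lq (volume.restrict (Ioo 0 R)) hpq hAm hBm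
  have e2 : ∫⁻ t in Ioo 0 R, ‖deriv f (t * ζ)‖ₑ = ∫⁻ t in Ioo 0 R, (A * B) t := by
    apply setLIntegral_congr_fun measurableSet_Ioo
    intro t ht
    have ht1 : 0 < 1 - t := by linarith [ht.2]
    simp only [Pi.mul_apply, hA, hB]
    rw [← ENNReal.ofReal_mul (by positivity), ← ofReal_norm, Real.rpow_neg ht1.le]
    congr 1
    field_simp
  have e3 : ∫⁻ t in Ioo 0 R, A t ^ p ≤ ENNReal.ofReal C * W := by
    refine le_trans (le_of_eq ?_) (h f hf ζ hζ R hR)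
    apply setLIntegral_congr_fun measurableSet_Ioo
    intro t ht
    have ht1 : 0 < 1 - t := by linarith [ht.2]
    simp only [hA]
    rw [ENNReal.ofReal_rpow_of_nonneg (by positivity) hp0.le,
      Real.mul_rpow (by positivity) (norm_nonneg _), ← Real.rpow_mul ht1.le,
      div_mul_cancel₀ _ hp0.ne']
  have e4 : ∫⁻ t in Ioo 0 R, B t ^ q = ENNReal.ofReal (- Real.log (1 - R)) := by
    have : ∫⁻ t in Ioo 0 R, B t ^ q = ∫⁻ t in Ioo 0 R, ENNReal.ofReal (1 - t)⁻¹ := by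
      apply setLIntegral_congr_fun measurableSet_Ioo
      intro t ht
      have ht1 : 0 < 1 - t := by linarith [ht.2]
      simp only [hB]
      rw [ENNReal.ofReal_rpow_of_nonneg (by positivity) hq0.le, ← Real.rpow_mul ht1.le]
      have : -((p - 1) / p) * q = -1 := by
        have : q = p / (p - 1) := rfl
        rw [this]
        have : p - 1 ≠ 0 := by linarith
        field_simp
      rw [this, Real.rpow_neg_one]
    rw [this, ← ofReal_integral_eq_lintegral_ofReal]
    · rw [← integral_Ioc_eq_integral_Ioo, ← intervalIntegral.integral_of_le hR0]
      rw [intervalIntegral.integral_comp_sub_left (fun x => x⁻¹) 1, integral_inv_of_pos (by linarith) (by linarith)]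
      congr 1
      simp
    · apply IntegrableOn.mono_set _ Ioo_subset_Icc_self
      apply ContinuousOn.integrableOn_Icc
      apply ContinuousOn.inv₀ (by fun_prop)
      intro t ht
      linarith [ht.2]
    · filter_upwards [ae_restrict_mem measurableSet_Ioo] with t ht
      have ht1 : 0 < 1 - t := by linarith [ht.2]
      positivity
  rw [← e2, e4] at hold
  have hlog : 0 ≤ - Real.log (1 - R) := by
    have := Real.log_nonpos (x := 1 - R) (by linarith) (by linarith)
    linarith
  have fin := e1.trans (hold.trans (mul_le_mul_left (ENNReal.rpow_le_rpow e3 (by positivity)) _))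
  rw [ENNReal.ofReal_rpow_of_nonneg hlog (by positivity), ← ENNReal.ofReal_toReal hfin',
    ← ENNReal.ofReal_mul ENNReal.toReal_nonneg, ← ofReal_norm,
    ENNReal.ofReal_le_ofReal_iff (mul_nonneg ENNReal.toReal_nonneg (by positivity)), hq1] at fin
  exact fin

lemma L_pos (z : ℂ) (hz : ‖z‖ < 1) : Real.log 2 ≤ Real.log (2 / (1 - ‖z‖ ^ 2)) := by
  have h1 : 0 < 1 - ‖z‖ ^ 2 := by nlinarith [norm_nonneg z]
  apply Real.log_le_log (by norm_num)
  rw [le_div_iff₀ h1]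
  nlinarith [norm_nonneg z]

lemma growth (p : ℝ) (hp : 1 < p) (f : ℂ → ℂ) (hf : f ∈ Besov p) :
    ∃ K : ℝ, 0 ≤ K ∧ ∀ z ∈ ball (0:ℂ) 1,
      ‖f z‖ ≤ K * (Real.log (2 / (1 - ‖z‖ ^ 2))) ^ (1 - 1 / p) := by
  obtain ⟨K, hK, h⟩ := growth_aux p hp f hf
  have ha : 0 ≤ 1 - 1 / p := by
    rw [sub_nonneg, div_le_one (by linarith)]; exact hp.le
  have hl2 : 0 < Real.log 2 := Real.log_pos (by norm_num)
  refine ⟨K + ‖f 0‖ / Real.log 2 ^ (1 - 1/p), by positivity, fun z hz => ?_⟩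
  have hz1 : ‖z‖ < 1 := by simpa using hz
  set a := 1 - 1 / p
  set Lz := Real.log (2 / (1 - ‖z‖ ^ 2)) with hLz
  have hL := L_pos z hz1
  have hLa : Real.log 2 ^ a ≤ Lz ^ a := Real.rpow_le_rpow hl2.le hL ha
  have hm : ‖f z - f 0‖ ≤ K * Lz ^ a := by
    have hlog0 : 0 ≤ - Real.log (1 - ‖z‖) := by
      have := Real.log_nonpos (x := 1 - ‖z‖) (by linarith) (by linarith [norm_nonneg z])
      linarith
    have hlog : - Real.log (1 - ‖z‖) ≤ Lz := by
      rw [← Real.log_inv]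
      apply Real.log_le_log (inv_pos.2 (by linarith))
      have h1 : 0 < 1 - ‖z‖ ^ 2 := by nlinarith [norm_nonneg z]
      rw [inv_eq_one_div, div_le_div_iff₀ (by linarith) h1]
      nlinarith [norm_nonneg z]
    rcases eq_or_ne z 0 with h0 | h0
    · have : 0 ≤ Lz ^ a := Real.rpow_nonneg (hl2.le.trans hL) _
      rw [h0]; simp; positivity
    · have hn : ‖z‖ ≠ 0 := norm_ne_zero_iff.2 h0
      have := h (z / ‖z‖) (by rw [norm_div]; simp [hn]) ‖z‖ (norm_nonneg z) hz1
      rw [mul_div_cancel₀ _ (by exact_mod_cast hn)] at this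
      exact this.trans (mul_le_mul_of_nonneg_left (Real.rpow_le_rpow hlog0 hlog ha) hK)
  have h0 : ‖f 0‖ ≤ ‖f 0‖ / Real.log 2 ^ a * Lz ^ a := by
    rw [div_mul_eq_mul_div, le_div_iff₀ (by positivity)]
    exact mul_le_mul_of_nonneg_left hLa (norm_nonneg _)
  calc ‖f z‖ = ‖(f z - f 0) + f 0‖ := by rw [sub_add_cancel]
    _ ≤ ‖f z - f 0‖ + ‖f 0‖ := norm_add_le _ _
    _ ≤ _ := by rw [add_mul]; exact add_le_add hm h0

lemma deriv_Mg (g f : ℂ → ℂ) (hg : HolOn g) (hf : HolOn f) (z : ℂ) (hz : z ∈ ball (0:ℂ) 1) :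
    deriv (Mg g f) z = deriv g z * f z + g z * deriv f z :=
  deriv_fun_mul ((hg z hz).differentiableAt (isOpen_ball.mem_nhds hz))
    ((hf z hz).differentiableAt (isOpen_ball.mem_nhds hz))

theorem suff (p a : ℝ) (hp : 1 < p) (ha : a = 1 - 1 / p)
    (g : ℂ → ℂ) (hg : g ∈ Hinf ∩ BlochLog a) : MapsInto (Mg g) (Besov p) Bloch := by
  obtain ⟨⟨hgh, M, hM⟩, ⟨_, N, hN⟩⟩ := hg
  intro f hf
  obtain ⟨K, hK, hgr⟩ := growth p hp f hf
  obtain ⟨hfh, B, hB⟩ := besov_bloch p hp f hf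
  refine ⟨hgh.mul hfh, N * K + M * B, fun z hz => ?_⟩
  have hz1 : ‖z‖ < 1 := by simpa using hz
  have h1 : 0 < 1 - ‖z‖ ^ 2 := by nlinarith [norm_nonneg z]
  rw [deriv_Mg g f hgh hfh z hz]
  have hM0 : 0 ≤ M := (norm_nonneg _).trans (hM z hz)
  rw [← ha] at hgr
  calc (1 - ‖z‖ ^ 2) * ‖deriv g z * f z + g z * deriv f z‖
      ≤ (1 - ‖z‖ ^ 2) * (‖deriv g z‖ * ‖f z‖ + ‖g z‖ * ‖deriv f z‖) := by
        rw [← norm_mul, ← norm_mul]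
        exact mul_le_mul_of_nonneg_left (norm_add_le _ _) h1.le
    _ ≤ (1 - ‖z‖ ^ 2) * (‖deriv g z‖ * (K * (Real.log (2 / (1 - ‖z‖ ^ 2))) ^ a)
          + M * ‖deriv f z‖) := by
        have := hgr z hz
        have := hM z hz
        gcongr
    _ = (1 - ‖z‖ ^ 2) * (Real.log (2 / (1 - ‖z‖ ^ 2))) ^ a * ‖deriv g z‖ * K
          + M * ((1 - ‖z‖ ^ 2) * ‖deriv f z‖) := by ring
    _ ≤ N * K + M * B := by
        have := hN z hz
        have := hB z hz
        gcongr

lemma kernel_lb (r ρ θ : ℝ) (hr0 : 0 ≤ r) (hr : r ≤ 1) (hρ0 : 0 ≤ ρ) (hρ : ρ ≤ 1)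
    (hθ : |θ| ≤ π) :
    ((1 - r) + (1 - ρ) + |θ|) / 20 ≤ ‖1 - (ρ:ℂ) * (r * Complex.exp (θ * Complex.I))‖ := by
  set x := ρ * r with hx
  have hx0 : 0 ≤ x := by positivity
  have hxr : x ≤ r := by nlinarith
  have hxρ : x ≤ ρ := by nlinarith
  have hn : ‖1 - (ρ:ℂ) * (r * Complex.exp (θ * Complex.I))‖ ^ 2 = 1 - 2 * x * Real.cos θ + x ^ 2 := by
    rw [← Complex.normSq_eq_norm_sq, Complex.exp_mul_I, ← Complex.ofReal_cos, ← Complex.ofReal_sin,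
      Complex.normSq_apply]
    have hsc := Real.sin_sq_add_cos_sq θ
    rw [hx]
    generalize Real.sin θ = S at *
    generalize Real.cos θ = T at *
    simp
    linear_combination (ρ * r) ^ 2 * hsc
  have hcos : Real.cos θ ≤ 1 - 2 / π ^ 2 * θ ^ 2 := Real.cos_le_one_sub_mul_cos_sq hθ
  have hpi : π < 3.15 := Real.pi_lt_d2
  have hpi0 := Real.pi_pos
  have h2 : (1/5) * θ ^ 2 ≤ 2 / π ^ 2 * θ ^ 2 := by
    apply mul_le_mul_of_nonneg_right _ (sq_nonneg _)
    rw [div_le_div_iff₀ (by norm_num) (by positivity)]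
    nlinarith
  have h3 : (1 - x) ^ 2 + 2 * x * ((1/5) * θ ^ 2) ≤ 1 - 2 * x * Real.cos θ + x ^ 2 := by
    nlinarith
  have hab : θ ^ 2 = |θ| ^ 2 := (sq_abs θ).symm
  have hta := abs_nonneg θ
  apply le_of_sq_le_sq _ (norm_nonneg _)
  rw [hn]
  refine le_trans ?_ h3
  rw [hab]
  have h4 : (1 - r) + (1 - ρ) + |θ| ≤ 2 * (1 - x) + |θ| := by linarith
  have h5 : (((1 - r) + (1 - ρ) + |θ|) / 20) ^ 2 ≤ ((2 * (1 - x) + |θ|) / 20) ^ 2 := by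
    apply pow_le_pow_left₀
    · have : 0 ≤ 1 - r := by linarith
      have : 0 ≤ 1 - ρ := by linarith
      positivity
    · linarith
  refine h5.trans ?_
  set y := |θ|
  rcases le_total x (1/2) with h | h
  · have : 0 ≤ 2 * x * (1 / 5 * y ^ 2) := by positivity
    have h6 : (2 * (1 - x) + y) / 20 ≤ 1/2 := by linarith
    have h7 : ((2 * (1 - x) + y) / 20) ^ 2 ≤ (1/2) ^ 2 :=
      pow_le_pow_left₀ (by have : 0 ≤ 1 - x := by linarith
                           positivity) h6 2
    nlinarith
  · nlinarith [sq_nonneg (2 * (1 - x) - y), mul_nonneg (sub_nonneg.2 h) (sq_nonneg y)]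

lemma ang_int (a q : ℝ) (ha : 0 < a) (hq : 1 < q) :
    ∫⁻ θ in Ioo (-π) π, ENNReal.ofReal ((a + |θ|) ^ (-q)) ≤
      ENNReal.ofReal (2 / (q - 1) * a ^ (1 - q)) := by
  have hpi := Real.pi_pos
  have hc : Continuous (fun θ : ℝ => (a + |θ|) ^ (-q)) := by
    apply Continuous.rpow_const (by fun_prop)
    intro θ
    left
    positivity
  rw [← ofReal_integral_eq_lintegral_ofReal]
  · apply ENNReal.ofReal_le_ofReal
    rw [← integral_Ioc_eq_integral_Ioo, ← intervalIntegral.integral_of_le (by linarith)]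
    have e0 : ∫ θ in (0:ℝ)..π, (a + |θ|) ^ (-q) ≤ 1 / (q - 1) * a ^ (1 - q) := by
      have : ∫ θ in (0:ℝ)..π, (a + |θ|) ^ (-q) = ∫ θ in (0:ℝ)..π, (a + θ) ^ (-q) := by
        apply intervalIntegral.integral_congr
        intro θ hθ
        rw [uIcc_of_le hpi.le] at hθ
        simp only [abs_of_nonneg hθ.1]
      rw [this, intervalIntegral.integral_comp_add_left (fun x => x ^ (-q)), integral_rpow]
      · rw [add_zero, show -q + 1 = -(q - 1) by ring, div_neg, ← neg_div, neg_sub, sub_div]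
        have : 0 ≤ (a + π) ^ (-(q-1)) / (q - 1) :=
          div_nonneg (by positivity) (by linarith)
        rw [show 1 - q = -(q - 1) by ring]
        rw [one_div_mul_eq_div]
        linarith
      · right
        constructor
        · linarith
        · rw [uIcc_of_le (by linarith)]
          intro h
          linarith [h.1]
    have e1 : ∫ θ in (-π)..0, (a + |θ|) ^ (-q) = ∫ θ in (0:ℝ)..π, (a + |θ|) ^ (-q) := by
      have := intervalIntegral.integral_comp_neg (a := 0) (b := π) (fun θ : ℝ => (a + |θ|) ^ (-q))
      simp only [abs_neg, neg_zero] at this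
      exact this.symm
    rw [← intervalIntegral.integral_add_adjacent_intervals (b := 0)
      (hc.intervalIntegrable _ _) (hc.intervalIntegrable _ _), e1]
    have : 2 / (q - 1) * a ^ (1 - q) = 1 / (q - 1) * a ^ (1 - q) + 1 / (q - 1) * a ^ (1 - q) := by
      ring
    linarith
  · exact (hc.integrableOn_Icc).mono_set Ioo_subset_Icc_self
  · exact Eventually.of_forall fun θ => by positivity

lemma rad1 (p δ : ℝ) (hp : 1 < p) (hδ : 0 < δ) :
    ∫⁻ r in Ioo (0:ℝ) 1, ENNReal.ofReal (δ * (1 - r) ^ (p - 2) * (1 - r + δ) ^ (-p)) ≤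
      ENNReal.ofReal (1 / (p - 1)) := by
  have hp1 : 0 < p - 1 := by linarith
  set G : ℝ → ℝ := fun r => - (1 / (p - 1)) * ((1 - r) / (1 - r + δ)) ^ (p - 1) with hG
  set G' : ℝ → ℝ := fun r => δ * (1 - r) ^ (p - 2) * (1 - r + δ) ^ (-p) with hG'
  have hcont : ContinuousOn G (Icc 0 1) := by
    apply ContinuousOn.mul continuousOn_const
    apply ContinuousOn.rpow_const
    · apply ContinuousOn.div (by fun_prop) (by fun_prop)
      intro r hr
      linarith [hr.2]
    · intro r _
      right; exact hp1.le
  have hder : ∀ r ∈ Ioo (0:ℝ) 1, HasDerivAt G (G' r) r := by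
    intro r hr
    have hs : 0 < 1 - r := by linarith [hr.2]
    have hsd : 0 < 1 - r + δ := by linarith
    have h1 : HasDerivAt (fun r : ℝ => 1 - r) (-1) r := by
      simpa using (hasDerivAt_id r).const_sub 1
    have h2 : HasDerivAt (fun r : ℝ => 1 - r + δ) (-1) r := h1.add_const δ
    have h3 := h1.div h2 hsd.ne'
    have h4 := (h3.rpow_const (p := p - 1) (Or.inl (div_pos hs hsd).ne')).const_mul (-(1/(p-1)))
    convert! h4 using 1
    simp only [hG', Pi.div_apply]
    rw [Real.div_rpow hs.le hsd.le, show p - 1 - 1 = p - 2 by ring]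
    have : (1 - r + δ) ^ (-p) = ((1 - r + δ) ^ (p - 2))⁻¹ * ((1 - r + δ) ^ 2)⁻¹ := by
      rw [← mul_inv, ← Real.rpow_natCast (1 - r + δ) 2, ← Real.rpow_add hsd, Real.rpow_neg hsd.le]
      congr 2
      push_cast; ring
    rw [this]
    have : (1 - r + δ) ^ (p - 2) ≠ 0 := by positivity
    field_simp
    ring
  have hpos : ∀ r ∈ Ioo (0:ℝ) 1, 0 ≤ G' r := by
    intro r hr
    have hs : 0 < 1 - r := by linarith [hr.2]
    have hsd : 0 < 1 - r + δ := by linarith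
    simp only [hG']
    positivity
  have hIntg := intervalIntegral.integrableOn_deriv_of_nonneg hcont hder hpos
  rw [← ofReal_integral_eq_lintegral_ofReal]
  · apply ENNReal.ofReal_le_ofReal
    rw [← integral_Ioc_eq_integral_Ioo, ← intervalIntegral.integral_of_le (by linarith)]
    rw [intervalIntegral.integral_eq_sub_of_hasDerivAt_of_le zero_le_one hcont hder
      ((intervalIntegrable_iff_integrableOn_Ioc_of_le zero_le_one).2 hIntg)]
    simp only [hG, sub_self, zero_div, Real.zero_rpow hp1.ne', sub_zero, mul_zero, zero_sub]
    have h1 : (1 / (1 + δ)) ^ (p - 1) ≤ 1 := by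
      apply Real.rpow_le_one (by positivity) _ hp1.le
      rw [div_le_one (by positivity)]; linarith
    have : 0 < 1 / (p - 1) := by positivity
    nlinarith
  · exact hIntg.mono_set Ioo_subset_Ioc_self
  · filter_upwards [ae_restrict_mem measurableSet_Ioo] with r hr using hpos r hr

lemma rad2 (δ : ℝ) (hδ : 0 < δ) :
    ∫⁻ r in Ioo (0:ℝ) 1, ENNReal.ofReal ((1 - r + δ)⁻¹) =
      ENNReal.ofReal (Real.log ((1 + δ) / δ)) := by
  rw [← ofReal_integral_eq_lintegral_ofReal]
  · rw [← integral_Ioc_eq_integral_Ioo, ← intervalIntegral.integral_of_le (by linarith)]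
    have : ∀ r : ℝ, (1 - r + δ)⁻¹ = (1 + δ - r)⁻¹ := fun r => by congr 1; ring
    simp_rw [this]
    rw [intervalIntegral.integral_comp_sub_left (fun x => x⁻¹) (1 + δ),
      integral_inv_of_pos (by linarith) (by linarith)]
    congr 3 <;> ring
  · apply IntegrableOn.mono_set _ Ioo_subset_Icc_self
    apply ContinuousOn.integrableOn_Icc
    apply ContinuousOn.inv₀ (by fun_prop)
    intro t ht
    linarith [ht.2]
  · filter_upwards [ae_restrict_mem measurableSet_Ioo] with t ht
    have ht1 : 0 < 1 - t := by linarith [ht.2]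
    positivity

lemma rot_lint (w : ℂ) (G : ℂ → ENNReal) : ∃ c : ℂ, ‖c‖ = 1 ∧ (starRingEnd ℂ) w * c = ‖w‖ ∧
    ∫⁻ z, G z = ∫⁻ z, G (c * z) := by
  obtain ⟨c, hc, hcw⟩ : ∃ c : ℂ, ‖c‖ = 1 ∧ (starRingEnd ℂ) w * c = ‖w‖ := by
    rcases eq_or_ne w 0 with h | h
    · exact ⟨1, by simp, by simp [h]⟩
    · have hn : ‖w‖ ≠ 0 := norm_ne_zero_iff.2 h
      refine ⟨w / ‖w‖, by rw [norm_div]; simp [hn], ?_⟩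
      have hn' : (‖w‖:ℂ) ≠ 0 := by exact_mod_cast hn
      rw [← mul_div_assoc, Complex.conj_mul']
      field_simp
  refine ⟨c, hc, hcw, ?_⟩
  have hmp := (rotation ⟨c, by simp [Submonoid.unitSphere, hc]⟩).measurePreserving
  have := hmp.lintegral_comp_emb (rotation _).toHomeomorph.measurableEmbedding G
  rw [← this]
  rfl

lemma forelli (p q : ℝ) (hq : 1 < q) (w : ℂ) (hw : ‖w‖ < 1) :
    ∫⁻ z in ball (0:ℂ) 1, ENNReal.ofReal ((1 - ‖z‖) ^ (p - 2) *
        ‖1 - (starRingEnd ℂ) w * z‖ ^ (-q)) ≤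
      ENNReal.ofReal (20 ^ q * (2 / (q - 1))) * ∫⁻ r in Ioo (0:ℝ) 1,
        ENNReal.ofReal ((1 - r) ^ (p - 2) * (1 - r + (1 - ‖w‖)) ^ (1 - q)) := by
  set F : ℂ → ENNReal := fun z => ENNReal.ofReal ((1 - ‖z‖) ^ (p - 2) *
        ‖1 - (starRingEnd ℂ) w * z‖ ^ (-q)) with hF
  have hFm : Measurable F := by
    simp only [hF]
    fun_prop
  rw [← lintegral_indicator measurableSet_ball]
  obtain ⟨c, hc, hcw, hrot⟩ := rot_lint w ((ball (0:ℂ) 1).indicator F)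
  rw [hrot, polar_lint]
  swap
  · apply (hFm.indicator measurableSet_ball).comp
    fun_prop
  set δ := 1 - ‖w‖ with hδ
  have hδ0 : 0 < δ := by linarith
  calc ∫⁻ ρ in Ioi (0:ℝ), ∫⁻ θ in Ioo (-π) π, ENNReal.ofReal ρ *
        (ball (0:ℂ) 1).indicator F (c * (ρ * Complex.exp (θ * Complex.I)))
      ≤ ∫⁻ ρ in Ioi (0:ℝ), (Ioo (0:ℝ) 1).indicator (fun r =>
          ENNReal.ofReal (20 ^ q * (2 / (q - 1))) *
          ENNReal.ofReal ((1 - r) ^ (p - 2) * (1 - r + δ) ^ (1 - q))) ρ := by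
        apply setLIntegral_mono' measurableSet_Ioi
        intro r hr
        have hr0 : (0:ℝ) < r := hr
        have hnorm : ∀ θ : ℝ, ‖c * (r * Complex.exp (θ * Complex.I))‖ = r := by
          intro θ
          rw [norm_mul, norm_mul, hc, Complex.norm_exp_ofReal_mul_I]
          simp [abs_of_pos hr0]
        by_cases hr1 : r < 1
        · have hs : 0 < 1 - r := by linarith
          rw [indicator_of_mem (show r ∈ Ioo (0:ℝ) 1 from ⟨hr0, hr1⟩)]
          calc
            ∫⁻ θ in Ioo (-π) π, ENNReal.ofReal r *
              (ball (0:ℂ) 1).indicator F (c * (r * Complex.exp (θ * Complex.I)))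
            ≤ ∫⁻ θ in Ioo (-π) π, ENNReal.ofReal (20 ^ q * (1 - r) ^ (p - 2)) *
                ENNReal.ofReal (((1 - r + δ) + |θ|) ^ (-q)) := by
              apply setLIntegral_mono' measurableSet_Ioo
              intro θ hθ
              have hθ' : |θ| ≤ π := abs_le.2 ⟨hθ.1.le, hθ.2.le⟩
              rw [indicator_of_mem (by simp only [mem_ball, dist_zero_right, hnorm]; exact hr1)]
              simp only [hF, hnorm]
              rw [← mul_assoc ((starRingEnd ℂ) w), hcw, ← ENNReal.ofReal_mul hr0.le,
                ← ENNReal.ofReal_mul (by positivity)]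
              apply ENNReal.ofReal_le_ofReal
              have hk := kernel_lb r ‖w‖ θ hr0.le hr1.le (norm_nonneg _) hw.le hθ'
              have hpos : 0 < (1 - r) + (1 - ‖w‖) + |θ| := by positivity
              have hk2 := Real.rpow_le_rpow_of_nonpos (by positivity) hk (by linarith : -q ≤ 0)
              rw [Real.div_rpow hpos.le (by norm_num), Real.rpow_neg (by norm_num : (0:ℝ) ≤ 20),
                div_inv_eq_mul] at hk2
              calc r * ((1 - r) ^ (p - 2) * ‖1 - (‖w‖:ℂ) * (r * Complex.exp (θ * Complex.I))‖ ^ (-q))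
                  ≤ 1 * ((1 - r) ^ (p - 2) * ‖1 - (‖w‖:ℂ) * (r * Complex.exp (θ * Complex.I))‖ ^ (-q)) := by
                    apply mul_le_mul_of_nonneg_right hr1.le (by positivity)
                _ ≤ 1 * ((1 - r) ^ (p - 2) * (((1 - r) + (1 - ‖w‖) + |θ|) ^ (-q) * 20 ^ q)) := by
                    gcongr
                _ = _ := by rw [hδ]; ring
            _ = ENNReal.ofReal (20 ^ q * (1 - r) ^ (p - 2)) * ∫⁻ θ in Ioo (-π) π,
                ENNReal.ofReal (((1 - r + δ) + |θ|) ^ (-q)) :=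
              lintegral_const_mul' _ _ ENNReal.ofReal_ne_top
            _ ≤ ENNReal.ofReal (20 ^ q * (1 - r) ^ (p - 2)) *
                ENNReal.ofReal (2 / (q - 1) * (1 - r + δ) ^ (1 - q)) :=
              mul_le_mul_right (ang_int _ _ (by positivity) hq) _
            _ = _ := by
              have : 0 < q - 1 := by linarith
              rw [← ENNReal.ofReal_mul (by positivity), ← ENNReal.ofReal_mul (by positivity)]
              congr 1
              ring
        · have : ∀ θ : ℝ, (ball (0:ℂ) 1).indicator F (c * (r * Complex.exp (θ * Complex.I))) = 0 := by
            intro θ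
            apply indicator_of_notMem
            simp only [mem_ball, dist_zero_right, hnorm]
            exact hr1
          simp [this]
    _ ≤ ∫⁻ ρ, (Ioo (0:ℝ) 1).indicator (fun r =>
          ENNReal.ofReal (20 ^ q * (2 / (q - 1))) *
          ENNReal.ofReal ((1 - r) ^ (p - 2) * (1 - r + δ) ^ (1 - q))) ρ :=
        setLIntegral_le_lintegral _ _
    _ = _ := by
        rw [lintegral_indicator measurableSet_Ioo, lintegral_const_mul' _ _ ENNReal.ofReal_ne_top]

lemma jensen_tsum (p : ℝ) (hp : 1 < p) (c b : ℕ → ENNReal) :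
    (∑' n, c n * b n) ^ p ≤ (∑' n, c n) ^ (p - 1) * ∑' n, c n * b n ^ p := by
  have hp0 : 0 < p := by linarith
  have hpq : p.HolderConjugate (Real.conjExponent p) := Real.HolderConjugate.conjExponent hp
  set q := Real.conjExponent p
  have hq0 : 0 < q := hpq.symm.pos
  have hinv : 1 / p + 1 / q = 1 := by
    have := hpq.inv_add_inv_eq_one
    rw [one_div, one_div]; exact this
  have h := ENNReal.lintegral_mul_le_Lp_mul_Lq (Measure.count : Measure ℕ) hpq
    (f := fun n => c n ^ (1/p) * b n) (g := fun n => c n ^ (1/q))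
    (Measurable.of_discrete).aemeasurable (Measurable.of_discrete).aemeasurable
  rw [lintegral_count, lintegral_count, lintegral_count] at h
  have e1 : ∀ n, ((fun n => c n ^ (1/p) * b n) * (fun n => c n ^ (1/q))) n = c n * b n := by
    intro n
    simp only [Pi.mul_apply]
    rw [mul_right_comm, ← ENNReal.rpow_add_of_nonneg _ _ (by positivity) (by positivity), hinv,
      ENNReal.rpow_one]
  have e2 : ∀ n, (c n ^ (1/p) * b n) ^ p = c n * b n ^ p := by
    intro n
    rw [ENNReal.mul_rpow_of_nonneg _ _ hp0.le, ← ENNReal.rpow_mul, one_div_mul_cancel hp0.ne',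
      ENNReal.rpow_one]
  have e3 : ∀ n, (c n ^ (1/q)) ^ q = c n := by
    intro n
    rw [← ENNReal.rpow_mul, one_div_mul_cancel hq0.ne', ENNReal.rpow_one]
  simp_rw [e1, e2, e3] at h
  have h3 := ENNReal.rpow_le_rpow h hp0.le
  rw [ENNReal.mul_rpow_of_nonneg _ _ hp0.le, ← ENNReal.rpow_mul, ← ENNReal.rpow_mul,
    one_div_mul_cancel hp0.ne', ENNReal.rpow_one] at h3
  have e4 : 1 / q * p = p - 1 := by
    have : 1 / q = 1 - 1 / p := by linarith
    rw [this]
    field_simp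
  rw [e4, mul_comm] at h3
  exact h3

lemma bdens_eq (p : ℝ) (hp : 1 < p) (f : ℂ → ℂ) (z : ℂ) (hz : z ∈ ball (0:ℂ) 1) :
    bdens p f z = ENNReal.ofReal ((1 - ‖z‖) ^ (p - 2)) * ‖deriv f z‖ₑ ^ p := by
  have hz1 : 0 < 1 - ‖z‖ := by have : ‖z‖ < 1 := by simpa using hz
                               linarith
  unfold bdens
  rw [ENNReal.ofReal_mul (by positivity), ← ofReal_norm,
    ENNReal.ofReal_rpow_of_nonneg (norm_nonneg _) (by linarith)]

lemma series_props (F : ℕ → ℂ → ℂ) (hF : ∀ n, HolOn (F n)) (B : ℝ)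
    (hB : ∀ n, ∀ z ∈ ball (0:ℂ) 1, ‖F n z‖ ≤ B / (1 - ‖z‖))
    (c : ℕ → ℂ) (hc : Summable fun n => ‖c n‖) (z : ℂ) (hz : z ∈ ball (0:ℂ) 1) :
    DifferentiableAt ℂ (fun w => ∑' n, c n * F n w) z ∧
    HasSum (fun n => c n * F n z) (∑' n, c n * F n z) ∧
    HasSum (fun n => c n * deriv (F n) z) (deriv (fun w => ∑' n, c n * F n w) z) := by
  have hz1 : ‖z‖ < 1 := by simpa using hz
  set r := (1 + ‖z‖) / 2 with hr
  have hr1 : r < 1 := by linarith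
  have hzr : z ∈ ball (0:ℂ) r := by simp only [mem_ball, dist_zero_right]; linarith
  have hsub : ball (0:ℂ) r ⊆ ball (0:ℂ) 1 := ball_subset_ball hr1.le
  have hB0 : 0 ≤ B := by
    have := (norm_nonneg _).trans (hB 0 0 (by simp))
    simpa using this
  have hu : Summable (fun n => ‖c n‖ * (B / (1 - r))) := hc.mul_right _
  have hle : ∀ n, ∀ w ∈ ball (0:ℂ) r, ‖c n * F n w‖ ≤ ‖c n‖ * (B / (1 - r)) := by
    intro n w hw
    rw [norm_mul]
    have hw1 : ‖w‖ < r := by simpa using hw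
    refine mul_le_mul_of_nonneg_left ((hB n w (hsub hw)).trans ?_) (norm_nonneg _)
    apply div_le_div_of_nonneg_left hB0 (by linarith) (by linarith)
  have hd : ∀ n, DifferentiableOn ℂ (fun w => c n * F n w) (ball (0:ℂ) r) :=
    fun n => (((hF n).mono hsub)).const_mul _
  refine ⟨?_, ?_, ?_⟩
  · exact ((differentiableOn_tsum_of_summable_norm hu hd isOpen_ball hle) z hzr).differentiableAt
      (isOpen_ball.mem_nhds hzr)
  · exact (Summable.of_norm_bounded hu (fun n => hle n z hzr)).hasSum
  · have := hasSum_deriv_of_summable_norm hu hd isOpen_ball hle hzr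
    convert! this using 2 with n
    rw [deriv_const_mul]
    exact (hF n z hz).differentiableAt (isOpen_ball.mem_nhds hz)

lemma series_besov (p : ℝ) (hp : 1 < p) (F : ℕ → ℂ → ℂ) (hF : ∀ n, HolOn (F n)) (B K : ℝ)
    (hB : ∀ n, ∀ z ∈ ball (0:ℂ) 1, ‖F n z‖ ≤ B / (1 - ‖z‖))
    (hK : ∀ n, ∫⁻ z in ball (0:ℂ) 1, bdens p (F n) z ≤ ENNReal.ofReal K)
    (c : ℕ → ℂ) (hc : Summable fun n => ‖c n‖) :
    (fun w => ∑' n, c n * F n w) ∈ Besov p := by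
  rw [besov_iff]
  refine ⟨fun z hz => (series_props F hF B hB c hc z hz).1.differentiableWithinAt, ?_⟩
  set S : ENNReal := ∑' n, ‖c n‖ₑ with hS
  have hSt : S ≠ ⊤ := by
    have := hc.tsum_ofReal_ne_top
    simpa [hS, ofReal_norm] using this
  calc ∫⁻ z in ball (0:ℂ) 1, bdens p (fun w => ∑' n, c n * F n w) z
      ≤ ∫⁻ z in ball (0:ℂ) 1, S ^ (p - 1) * ∑' n, ‖c n‖ₑ * bdens p (F n) z := by
        apply setLIntegral_mono' measurableSet_ball
        intro z hz
        rw [bdens_eq p hp _ z hz]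
        simp_rw [bdens_eq p hp _ z hz]
        have h1 : ‖deriv (fun w => ∑' n, c n * F n w) z‖ₑ ≤ ∑' n, ‖c n‖ₑ * ‖deriv (F n) z‖ₑ := by
          rw [← (series_props F hF B hB c hc z hz).2.2.tsum_eq]
          refine enorm_tsum_le_tsum_enorm.trans (le_of_eq ?_)
          simp_rw [enorm_mul]
        have h2 := (ENNReal.rpow_le_rpow h1 (by linarith : 0 ≤ p)).trans
          (jensen_tsum p hp _ _)
        refine (mul_le_mul_right h2 _).trans (le_of_eq ?_)
        rw [mul_left_comm, ← ENNReal.tsum_mul_left]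
        congr 1
        congr 1
        ext n
        ring
    _ = S ^ (p - 1) * ∑' n, ‖c n‖ₑ * ∫⁻ z in ball (0:ℂ) 1, bdens p (F n) z := by
        rw [lintegral_const_mul', lintegral_tsum]
        · congr 2
          ext n
          rw [lintegral_const_mul' _ _ enorm_ne_top]
        · intro n
          exact (bdens_aem p _ (hF n)).const_mul _
        · exact ENNReal.rpow_ne_top_of_nonneg (by linarith) hSt
    _ ≤ S ^ (p - 1) * ∑' n, ‖c n‖ₑ * ENNReal.ofReal K := by
        refine mul_le_mul_right ?_ _
        apply ENNReal.tsum_le_tsum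
        intro n
        exact mul_le_mul_right (hK n) _
    _ = S ^ (p - 1) * (S * ENNReal.ofReal K) := by rw [ENNReal.tsum_mul_right]
    _ < ⊤ := by
        apply ENNReal.mul_lt_top
        · exact lt_top_iff_ne_top.2 (ENNReal.rpow_ne_top_of_nonneg (by linarith) hSt)
        · exact ENNReal.mul_lt_top (lt_top_iff_ne_top.2 hSt) ENNReal.ofReal_lt_top

lemma l1_summable (c : lp (fun _ : ℕ => ℂ) 1) : Summable fun n => ‖c n‖ := by
  have := (lp.memℓp c).summable (by simp)
  simpa using this

lemma l1_norm (c : lp (fun _ : ℕ => ℂ) 1) : ‖c‖ = ∑' n, ‖c n‖ := by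
  have := lp.norm_eq_tsum_rpow (p := 1) (by simp) c
  simpa using this

/-- The functional on `ℓ¹` attached to a bounded sequence. -/
lemma l1_functional (a : ℕ → ℂ) (A : ℝ) (ha : ∀ n, ‖a n‖ ≤ A) :
    ∃ T : lp (fun _ : ℕ => ℂ) 1 →L[ℂ] ℂ, ∀ c, HasSum (fun n => c n * a n) (T c) := by
  have hs : ∀ c : lp (fun _ : ℕ => ℂ) 1, Summable fun n => c n * a n := by
    intro c
    apply Summable.of_norm_bounded ((l1_summable c).mul_right A)
    intro n
    rw [norm_mul]
    exact mul_le_mul_of_nonneg_left (ha n) (norm_nonneg _)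
  let T0 : lp (fun _ : ℕ => ℂ) 1 →ₗ[ℂ] ℂ :=
    { toFun := fun c => ∑' n, c n * a n
      map_add' := by
        intro c d
        rw [← (hs c).tsum_add (hs d)]
        congr 1
        ext n
        simp [add_mul]
      map_smul' := by
        intro k c
        simp only [RingHom.id_apply, smul_eq_mul]
        rw [← tsum_mul_left]
        congr 1
        ext n
        simp [mul_assoc] }
  refine ⟨T0.mkContinuous A ?_, fun c => (hs c).hasSum⟩
  intro c
  have h2 : Summable fun n => ‖c n * a n‖ := by
    apply Summable.of_nonneg_of_le (fun _ => norm_nonneg _) _ ((l1_summable c).mul_right A)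
    intro n
    rw [norm_mul]
    exact mul_le_mul_of_nonneg_left (ha n) (norm_nonneg _)
  rw [l1_norm, mul_comm, ← tsum_mul_right]
  refine (norm_tsum_le_tsum_norm h2).trans ?_
  apply h2.tsum_le_tsum _ ((l1_summable c).mul_right A)
  intro n
  rw [norm_mul]
  exact mul_le_mul_of_nonneg_left (ha n) (norm_nonneg _)

lemma bs_seq (p : ℝ) (hp : 1 < p) (g : ℂ → ℂ) (hg : HolOn g)
    (hmap : MapsInto (Mg g) (Besov p) Bloch)
    (F : ℕ → ℂ → ℂ) (hF : ∀ n, HolOn (F n)) (B K : ℝ)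
    (hB : ∀ n, ∀ z ∈ ball (0:ℂ) 1, ‖F n z‖ ≤ B / (1 - ‖z‖))
    (hB' : ∀ n, ∀ z ∈ ball (0:ℂ) 1, ‖deriv (F n) z‖ ≤ B / (1 - ‖z‖))
    (hK : ∀ n, ∫⁻ z in ball (0:ℂ) 1, bdens p (F n) z ≤ ENNReal.ofReal K) :
    ∃ C : ℝ, ∀ n, ∀ z ∈ ball (0:ℂ) 1, (1 - ‖z‖ ^ 2) * ‖deriv (Mg g (F n)) z‖ ≤ C := by
  have hT : ∀ z : ball (0:ℂ) 1, ∃ T : lp (fun _ : ℕ => ℂ) 1 →L[ℂ] ℂ, ∀ c,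
      HasSum (fun n => c n * (((1 - ‖(z:ℂ)‖ ^ 2 : ℝ) : ℂ) * deriv (Mg g (F n)) z)) (T c) := by
    rintro ⟨z, hz⟩
    apply l1_functional _ (‖((1 - ‖z‖ ^ 2 : ℝ) : ℂ)‖ *
      (‖deriv g z‖ * (B / (1 - ‖z‖)) + ‖g z‖ * (B / (1 - ‖z‖))))
    intro n
    rw [norm_mul, deriv_Mg g (F n) hg (hF n) z hz]
    refine mul_le_mul_of_nonneg_left ((norm_add_le _ _).trans ?_) (norm_nonneg _)
    rw [norm_mul, norm_mul]
    exact add_le_add (mul_le_mul_of_nonneg_left (hB n z hz) (norm_nonneg _))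
      (mul_le_mul_of_nonneg_left (hB' n z hz) (norm_nonneg _))
  choose T hT using hT
  have : Fact ((1:ENNReal) ≤ 1) := ⟨le_rfl⟩
  obtain ⟨C, hC⟩ := banach_steinhaus (g := T) (by
    intro c
    obtain ⟨_, C, hC⟩ := hmap _ (series_besov p hp F hF B K hB hK c (l1_summable c))
    refine ⟨C, ?_⟩
    rintro ⟨z, hz⟩
    have hz1 : 0 < 1 - ‖z‖ ^ 2 := by
      have : ‖z‖ < 1 := by simpa using hz
      nlinarith [norm_nonneg z]
    obtain ⟨h1, h2, h3⟩ := series_props F hF B hB c (l1_summable c) z hz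
    have h4 := ((h2.mul_left (deriv g z)).add (h3.mul_left (g z))).mul_left
      ((1 - ‖z‖ ^ 2 : ℝ) : ℂ)
    have h5 := hC z hz
    rw [deriv_Mg g _ hg (fun z hz => (series_props F hF B hB c (l1_summable c) z
      hz).1.differentiableWithinAt) z hz] at h5
    have h6 : T ⟨z, hz⟩ c = ((1 - ‖z‖ ^ 2 : ℝ) : ℂ) * (deriv g z * ∑' n, c n * F n z +
        g z * deriv (fun w => ∑' n, c n * F n w) z) := by
      refine (hT ⟨z, hz⟩ c).unique ?_
      convert! h4 using 2 with n
      rw [deriv_Mg g (F n) hg (hF n) z hz]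
      ring
    rw [h6, norm_mul, Complex.norm_real, Real.norm_of_nonneg hz1.le]
    exact h5)
  refine ⟨C, fun n z hz => ?_⟩
  have hz1 : 0 < 1 - ‖z‖ ^ 2 := by
    have : ‖z‖ < 1 := by simpa using hz
    nlinarith [norm_nonneg z]
  have h1 := (T ⟨z, hz⟩).le_opNorm (lp.single 1 n (1:ℂ))
  have h2 : ‖(lp.single 1 n (1:ℂ) : lp (fun _ : ℕ => ℂ) 1)‖ = 1 := by
    rw [lp.norm_single (by simp)]; simp
  have h3 : T ⟨z, hz⟩ (lp.single 1 n (1:ℂ)) =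
      ((1 - ‖z‖ ^ 2 : ℝ) : ℂ) * deriv (Mg g (F n)) z := by
    refine (hT ⟨z, hz⟩ _).unique ?_
    have h0 := hasSum_single (f := fun m => (lp.single 1 n (1:ℂ) : lp (fun _ : ℕ => ℂ) 1) m *
      (((1 - ‖z‖ ^ 2 : ℝ) : ℂ) * deriv (Mg g (F m)) z)) n (by
        intro m hm
        simp [hm])
    rw [lp.single_apply_self, one_mul] at h0
    exact h0
  rw [h2, h3, mul_one, norm_mul, Complex.norm_real, Real.norm_of_nonneg hz1.le] at h1
  exact h1.trans (hC ⟨z, hz⟩)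

lemma bs_fam (p : ℝ) (hp : 1 < p) (g : ℂ → ℂ) (hg : HolOn g)
    (hmap : MapsInto (Mg g) (Besov p) Bloch)
    (F : ℂ → ℂ → ℂ) (hF : ∀ w ∈ ball (0:ℂ) 1, HolOn (F w)) (B K : ℝ)
    (hB : ∀ w ∈ ball (0:ℂ) 1, ∀ z ∈ ball (0:ℂ) 1, ‖F w z‖ ≤ B / (1 - ‖z‖))
    (hB' : ∀ w ∈ ball (0:ℂ) 1, ∀ z ∈ ball (0:ℂ) 1, ‖deriv (F w) z‖ ≤ B / (1 - ‖z‖))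
    (hK : ∀ w ∈ ball (0:ℂ) 1, ∫⁻ z in ball (0:ℂ) 1, bdens p (F w) z ≤ ENNReal.ofReal K) :
    ∃ C : ℝ, ∀ w ∈ ball (0:ℂ) 1, (1 - ‖w‖ ^ 2) * ‖deriv (Mg g (F w)) w‖ ≤ C := by
  by_contra! hcon
  choose w hw hlt using fun n : ℕ => hcon n
  obtain ⟨C, hC⟩ := bs_seq p hp g hg hmap (fun n => F (w n)) (fun n => hF _ (hw n)) B K
    (fun n => hB _ (hw n)) (fun n => hB' _ (hw n)) (fun n => hK _ (hw n))
  obtain ⟨n, hn⟩ := exists_nat_gt C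
  have := hC n (w n) (hw n)
  have := hlt n
  linarith

lemma ker_basic (w z : ℂ) (hw : ‖w‖ < 1) (hz : ‖z‖ < 1) :
    1 - ‖z‖ ≤ ‖1 - (starRingEnd ℂ) w * z‖ ∧ 1 - ‖w‖ ≤ ‖1 - (starRingEnd ℂ) w * z‖ ∧
    1 - (starRingEnd ℂ) w * z ∈ slitPlane ∧ ‖(starRingEnd ℂ) w * z‖ ≤ ‖z‖ := by
  have hn : ‖(starRingEnd ℂ) w * z‖ = ‖w‖ * ‖z‖ := by rw [norm_mul, RCLike.norm_conj]
  have h1 : 1 - ‖w‖ * ‖z‖ ≤ ‖1 - (starRingEnd ℂ) w * z‖ := by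
    have := norm_sub_norm_le (1:ℂ) ((starRingEnd ℂ) w * z)
    rw [hn, norm_one] at this
    exact this
  have h2 : ‖w‖ * ‖z‖ ≤ ‖z‖ := by nlinarith [norm_nonneg w, norm_nonneg z]
  have h3 : ‖w‖ * ‖z‖ ≤ ‖w‖ := by nlinarith [norm_nonneg w, norm_nonneg z]
  refine ⟨by linarith, by linarith, Or.inl ?_, by rw [hn]; exact h2⟩
  have := Complex.re_le_norm ((starRingEnd ℂ) w * z)
  rw [Complex.sub_re, Complex.one_re]
  linarith

lemma self_ker (w : ℂ) : 1 - (starRingEnd ℂ) w * w = ((1 - ‖w‖ ^ 2 : ℝ) : ℂ) := by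
  rw [mul_comm, Complex.mul_conj, Complex.normSq_eq_norm_sq]; push_cast; ring

lemma bdens_int (p q A : ℝ) (hq : 1 < q) (hA : 0 ≤ A) (f : ℂ → ℂ) (w : ℂ) (hw : ‖w‖ < 1)
    (h : ∀ z ∈ ball (0:ℂ) 1, ‖deriv f z‖ ^ p ≤ A * ‖1 - (starRingEnd ℂ) w * z‖ ^ (-q)) :
    ∫⁻ z in ball (0:ℂ) 1, bdens p f z ≤ ENNReal.ofReal A *
      (ENNReal.ofReal (20 ^ q * (2 / (q - 1))) * ∫⁻ r in Ioo (0:ℝ) 1,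
        ENNReal.ofReal ((1 - r) ^ (p - 2) * (1 - r + (1 - ‖w‖)) ^ (1 - q))) := by
  refine le_trans ?_ (mul_le_mul_right (forelli p q hq w hw) _)
  rw [← lintegral_const_mul' _ _ ENNReal.ofReal_ne_top]
  refine setLIntegral_mono' measurableSet_ball fun z hz => ?_
  rw [← ENNReal.ofReal_mul hA]
  refine ENNReal.ofReal_le_ofReal ?_
  have hz1 : ‖z‖ < 1 := by simpa using hz
  have h0 : 0 ≤ (1 - ‖z‖) ^ (p - 2) := Real.rpow_nonneg (by linarith) _
  calc (1 - ‖z‖) ^ (p - 2) * ‖deriv f z‖ ^ p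
      ≤ (1 - ‖z‖) ^ (p - 2) * (A * ‖1 - (starRingEnd ℂ) w * z‖ ^ (-q)) :=
        mul_le_mul_of_nonneg_left (h z hz) h0
    _ = _ := by ring

noncomputable def hT (w z : ℂ) : ℂ := ((1 - ‖w‖ ^ 2 : ℝ) : ℂ) / (1 - (starRingEnd ℂ) w * z)

lemma hT_deriv (w z : ℂ) (hw : ‖w‖ < 1) (hz : ‖z‖ < 1) :
    HasDerivAt (hT w) (((1 - ‖w‖ ^ 2 : ℝ) : ℂ) * (starRingEnd ℂ) w /
      (1 - (starRingEnd ℂ) w * z) ^ 2) z := by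
  have hne := slitPlane_ne_zero (ker_basic w z hw hz).2.2.1
  have h1 : HasDerivAt (fun z => 1 - (starRingEnd ℂ) w * z) (-(starRingEnd ℂ) w) z := by
    simpa using ((hasDerivAt_id z).const_mul ((starRingEnd ℂ) w)).const_sub 1
  have h2 := (hasDerivAt_const z (((1 - ‖w‖ ^ 2 : ℝ) : ℂ))).div h1 hne
  convert! h2 using 1
  ring

lemma hT_hol (w : ℂ) (hw : ‖w‖ < 1) : HolOn (hT w) := fun z hz =>
  (hT_deriv w z hw (by simpa using hz)).differentiableAt.differentiableWithinAt

lemma hT_dnorm (w z : ℂ) (hw : ‖w‖ < 1) (hz : ‖z‖ < 1) :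
    ‖deriv (hT w) z‖ ≤ 2 * (1 - ‖w‖) / ‖1 - (starRingEnd ℂ) w * z‖ ^ 2 := by
  rw [(hT_deriv w z hw hz).deriv, norm_div, norm_pow, norm_mul, RCLike.norm_conj,
    Complex.norm_real, Real.norm_of_nonneg (by nlinarith [norm_nonneg w])]
  have : 0 ≤ 1 - ‖w‖ := by linarith
  refine div_le_div_of_nonneg_right ?_ (by positivity)
  calc (1 - ‖w‖ ^ 2) * ‖w‖ = (1 - ‖w‖) * ((1 + ‖w‖) * ‖w‖) := by ring
    _ ≤ (1 - ‖w‖) * 2 := by gcongr; nlinarith [norm_nonneg w]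
    _ = _ := by ring

lemma hT_bd (w z : ℂ) (hw : ‖w‖ < 1) (hz : ‖z‖ < 1) :
    ‖hT w z‖ ≤ 2 / (1 - ‖z‖) := by
  obtain ⟨h1, h2, h3, h4⟩ := ker_basic w z hw hz
  have hz0 : 0 < 1 - ‖z‖ := by linarith
  rw [hT, norm_div, Complex.norm_real, Real.norm_of_nonneg (by nlinarith [norm_nonneg w])]
  gcongr
  nlinarith [norm_nonneg w]

lemma hT_dbd (w z : ℂ) (hw : ‖w‖ < 1) (hz : ‖z‖ < 1) :
    ‖deriv (hT w) z‖ ≤ 2 / (1 - ‖z‖) := by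
  obtain ⟨h1, h2, h3, h4⟩ := ker_basic w z hw hz
  have hz0 : 0 < 1 - ‖z‖ := by linarith
  have hk : 0 < ‖1 - (starRingEnd ℂ) w * z‖ := by linarith
  refine (hT_dnorm w z hw hz).trans ?_
  rw [div_le_div_iff₀ (by positivity) hz0]
  have := mul_le_mul h2 h1 hz0.le hk.le
  nlinarith

lemma hT_K (p : ℝ) (hp : 1 < p) (w : ℂ) (hw : ‖w‖ < 1) :
    ∫⁻ z in ball (0:ℂ) 1, bdens p (hT w) z ≤
      ENNReal.ofReal (2 ^ p * ((20 ^ (p + 1) * (2 / (p + 1 - 1))) * (1 / (p - 1)))) := by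
  have hδ : 0 < 1 - ‖w‖ := by linarith
  have hp1 : 0 < p - 1 := by linarith
  refine (bdens_int p (p + 1) (2 ^ p * (1 - ‖w‖)) (by linarith) (by positivity) (hT w) w hw
    ?_).trans ?_
  · intro z hz
    have hz1 : ‖z‖ < 1 := by simpa using hz
    obtain ⟨h1, h2, h3, h4⟩ := ker_basic w z hw hz1
    have hk : 0 < ‖1 - (starRingEnd ℂ) w * z‖ := by linarith
    set k := ‖1 - (starRingEnd ℂ) w * z‖ with hkd
    calc ‖deriv (hT w) z‖ ^ p ≤ (2 * (1 - ‖w‖) / k ^ 2) ^ p :=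
          Real.rpow_le_rpow (norm_nonneg _) (hT_dnorm w z hw hz1) (by linarith)
      _ = 2 ^ p * ((1 - ‖w‖) * (1 - ‖w‖) ^ (p - 1)) * (k ^ 2) ^ (-p) := by
          rw [Real.div_rpow (by positivity) (by positivity), Real.mul_rpow (by norm_num) hδ.le,
            Real.rpow_neg (by positivity), div_eq_mul_inv]
          congr 2
          rw [← Real.rpow_one_add' hδ.le (by linarith)]
          congr 1; ring
      _ ≤ 2 ^ p * ((1 - ‖w‖) * k ^ (p - 1)) * (k ^ 2) ^ (-p) := by gcongr
      _ = 2 ^ p * (1 - ‖w‖) * k ^ (-(p + 1)) := by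
          rw [← Real.rpow_natCast k 2, ← Real.rpow_mul hk.le]
          have : k ^ (p - 1) * k ^ (((2:ℕ):ℝ) * -p) = k ^ (-(p + 1)) := by
            rw [← Real.rpow_add hk]; congr 1; push_cast; ring
          rw [← this]; ring
  · have h2p : (0:ℝ) ≤ 2 ^ p := by positivity
    have hc0 : (0:ℝ) ≤ 20 ^ (p + 1) * (2 / (p + 1 - 1)) := by
      rw [add_sub_cancel_right]; positivity
    rw [ENNReal.ofReal_mul (p := 2 ^ p) (q := 1 - ‖w‖) h2p,
      ENNReal.ofReal_mul (p := (2:ℝ) ^ p) (h2p),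
      ENNReal.ofReal_mul (q := 1 / (p - 1)) hc0, mul_assoc]
    refine mul_le_mul_right ?_ _
    rw [mul_left_comm]
    refine mul_le_mul_right ?_ _
    refine le_trans (le_of_eq ?_) (rad1 p (1 - ‖w‖) hp hδ)
    rw [← lintegral_const_mul' _ _ ENNReal.ofReal_ne_top]
    refine setLIntegral_congr_fun measurableSet_Ioo fun r _ => ?_
    rw [← ENNReal.ofReal_mul hδ.le]
    congr 1
    rw [← mul_assoc]
    congr 2; ring

noncomputable def fT (p : ℝ) (w z : ℂ) : ℂ := ((Real.log (2 / (1 - ‖w‖ ^ 2)) ^ (-(1 / p)) : ℝ) : ℂ) *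
  (((Real.log 2 : ℝ) : ℂ) - Complex.log (1 - (starRingEnd ℂ) w * z))

lemma fT_deriv (p : ℝ) (w z : ℂ) (hw : ‖w‖ < 1) (hz : ‖z‖ < 1) :
    HasDerivAt (fT p w) (((Real.log (2 / (1 - ‖w‖ ^ 2)) ^ (-(1 / p)) : ℝ) : ℂ) *
      ((starRingEnd ℂ) w / (1 - (starRingEnd ℂ) w * z))) z := by
  have hs := (ker_basic w z hw hz).2.2.1
  have h1 : HasDerivAt (fun z => 1 - (starRingEnd ℂ) w * z) (-(starRingEnd ℂ) w) z := by
    simpa using ((hasDerivAt_id z).const_mul ((starRingEnd ℂ) w)).const_sub 1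
  have h2 := ((h1.clog hs).const_sub ((Real.log 2 : ℝ) : ℂ)).const_mul
    (((Real.log (2 / (1 - ‖w‖ ^ 2)) ^ (-(1 / p)) : ℝ) : ℂ))
  convert! h2 using 1
  ring

lemma fT_hol (p : ℝ) (w : ℂ) (hw : ‖w‖ < 1) : HolOn (fT p w) := fun z hz =>
  (fT_deriv p w z hw (by simpa using hz)).differentiableAt.differentiableWithinAt

lemma log2_pos : 0 < Real.log 2 := Real.log_pos (by norm_num)

lemma Lp_bd (p : ℝ) (hp : 1 < p) (w : ℂ) (hw : ‖w‖ < 1) :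
    Real.log (2 / (1 - ‖w‖ ^ 2)) ^ (-(1 / p)) ≤ Real.log 2 ^ (-(1 / p)) :=
  Real.rpow_le_rpow_of_nonpos log2_pos (L_pos w hw) (by
    have : 0 < 1 / p := by positivity
    linarith)

lemma fT_dnorm (p : ℝ) (w z : ℂ) (hw : ‖w‖ < 1) (hz : ‖z‖ < 1) :
    ‖deriv (fT p w) z‖ ≤ Real.log (2 / (1 - ‖w‖ ^ 2)) ^ (-(1 / p)) *
      ‖1 - (starRingEnd ℂ) w * z‖⁻¹ := by
  have hL := log2_pos.trans_le (L_pos w hw)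
  rw [(fT_deriv p w z hw hz).deriv, norm_mul, norm_div, RCLike.norm_conj, Complex.norm_real,
    Real.norm_of_nonneg (by positivity), div_eq_mul_inv]
  gcongr
  calc ‖w‖ * ‖1 - (starRingEnd ℂ) w * z‖⁻¹ ≤ 1 * ‖1 - (starRingEnd ℂ) w * z‖⁻¹ := by gcongr
    _ = _ := one_mul _

lemma fT_bd (p : ℝ) (hp : 1 < p) (w z : ℂ) (hw : ‖w‖ < 1) (hz : ‖z‖ < 1) :
    ‖fT p w z‖ ≤ (3 * Real.log 2 ^ (-(1 / p))) / (1 - ‖z‖) := by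
  obtain ⟨h1, h2, h3, h4⟩ := ker_basic w z hw hz
  have hL := log2_pos.trans_le (L_pos w hw)
  have hz0 : 0 < 1 - ‖z‖ := by linarith
  have hl : ‖Complex.log (1 - (starRingEnd ℂ) w * z)‖ ≤ 2 / (1 - ‖z‖) := by
    have := Complex.norm_log_one_add_le (z := -((starRingEnd ℂ) w * z)) (by
      rw [norm_neg]; linarith)
    rw [← sub_eq_add_neg, norm_neg] at this
    refine this.trans ?_
    set u := ‖(starRingEnd ℂ) w * z‖ with hu
    have hu0 : 0 ≤ u := norm_nonneg _
    have hu1 : 0 < 1 - u := by linarith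
    calc u ^ 2 * (1 - u)⁻¹ / 2 + u ≤ 2 / (1 - u) := by
          rw [le_div_iff₀ hu1]
          have : (u ^ 2 * (1 - u)⁻¹ / 2 + u) * (1 - u) = u ^ 2 / 2 + u * (1 - u) := by
            field_simp
          rw [this]; nlinarith
      _ ≤ _ := by gcongr
  have hl2 : Real.log 2 ≤ 1 := by
    have := Real.log_two_lt_d9; linarith
  have h5 : (1:ℝ) ≤ 1 / (1 - ‖z‖) := by
    rw [le_div_iff₀ hz0]; linarith [norm_nonneg z]
  rw [fT, norm_mul, Complex.norm_real, Real.norm_of_nonneg (by positivity)]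
  calc _ ≤ Real.log 2 ^ (-(1 / p)) * (1 / (1 - ‖z‖) + 2 / (1 - ‖z‖)) := by
        refine mul_le_mul (Lp_bd p hp w hw) ?_ (norm_nonneg _)
          (Real.rpow_nonneg log2_pos.le _)
        refine (norm_sub_le _ _).trans (add_le_add ?_ hl)
        rw [Complex.norm_real, Real.norm_of_nonneg log2_pos.le]
        linarith
    _ = _ := by ring

lemma fT_dbd (p : ℝ) (hp : 1 < p) (w z : ℂ) (hw : ‖w‖ < 1) (hz : ‖z‖ < 1) :
    ‖deriv (fT p w) z‖ ≤ (3 * Real.log 2 ^ (-(1 / p))) / (1 - ‖z‖) := by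
  obtain ⟨h1, h2, h3, h4⟩ := ker_basic w z hw hz
  have hz0 : 0 < 1 - ‖z‖ := by linarith
  have h0 : 0 < Real.log 2 ^ (-(1 / p)) := Real.rpow_pos_of_pos log2_pos _
  refine (fT_dnorm p w z hw hz).trans ?_
  calc _ ≤ Real.log 2 ^ (-(1 / p)) * (1 - ‖z‖)⁻¹ :=
        mul_le_mul (Lp_bd p hp w hw) (by gcongr) (by positivity) h0.le
    _ ≤ (3 * Real.log 2 ^ (-(1 / p))) * (1 - ‖z‖)⁻¹ := by
        gcongr; linarith
    _ = _ := (div_eq_mul_inv _ _).symm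

lemma log_le_two (w : ℂ) (hw : ‖w‖ < 1) :
    Real.log ((1 + (1 - ‖w‖)) / (1 - ‖w‖)) ≤ 2 * Real.log (2 / (1 - ‖w‖ ^ 2)) := by
  have h0 := norm_nonneg w
  have h1 : 0 < 1 - ‖w‖ ^ 2 := by nlinarith
  have h2 : 0 < 1 - ‖w‖ := by linarith
  rw [show 2 * Real.log (2 / (1 - ‖w‖ ^ 2)) = ((2:ℕ):ℝ) * Real.log (2 / (1 - ‖w‖ ^ 2)) by
    norm_num, ← Real.log_pow]
  apply Real.log_le_log (by positivity)
  rw [div_pow, div_le_div_iff₀ h2 (by positivity)]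
  have h3 : (1 - ‖w‖ ^ 2) ^ 2 = (1 - ‖w‖) * ((1 - ‖w‖) * (1 + ‖w‖) ^ 2) := by ring
  have h4 : (1 + (1 - ‖w‖)) * ((1 - ‖w‖) * (1 + ‖w‖) ^ 2) ≤ 2 ^ 2 := by
    have e : (1 + (1 - ‖w‖)) * ((1 - ‖w‖) * (1 + ‖w‖) ^ 2) =
      (2 - ‖w‖) * (1 + ‖w‖) * (1 - ‖w‖ ^ 2) := by ring
    have a1 : (2 - ‖w‖) * (1 + ‖w‖) ≤ 9 / 4 := by nlinarith [sq_nonneg (‖w‖ - 1 / 2)]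
    rw [e]
    nlinarith
  rw [h3]
  nlinarith

lemma fT_K (p : ℝ) (hp : 1 < p) (w : ℂ) (hw : ‖w‖ < 1) :
    ∫⁻ z in ball (0:ℂ) 1, bdens p (fT p w) z ≤
      ENNReal.ofReal ((20 ^ p * (2 / (p - 1))) * (1 / (p - 1) / Real.log 2 + 2)) := by
  have hδ : 0 < 1 - ‖w‖ := by linarith
  have hp1 : 0 < p - 1 := by linarith
  have hl2 := log2_pos
  have hLL := L_pos w hw
  have hlog := log_le_two w hw
  set L := Real.log (2 / (1 - ‖w‖ ^ 2)) with hLd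
  have hL : 0 < L := log2_pos.trans_le hLL
  refine (bdens_int p p (L⁻¹) hp (by positivity) (fT p w) w hw ?_).trans ?_
  · intro z hz
    have hz1 : ‖z‖ < 1 := by simpa using hz
    have hk : 0 ≤ ‖1 - (starRingEnd ℂ) w * z‖ := norm_nonneg _
    calc ‖deriv (fT p w) z‖ ^ p ≤ (L ^ (-(1 / p)) * ‖1 - (starRingEnd ℂ) w * z‖⁻¹) ^ p :=
          Real.rpow_le_rpow (norm_nonneg _) (fT_dnorm p w z hw hz1) (by linarith)
      _ = _ := by
          rw [Real.mul_rpow (by positivity) (by positivity), ← Real.rpow_mul hL.le,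
            Real.inv_rpow hk, Real.rpow_neg hk, show -(1 / p) * p = -1 by field_simp,
            Real.rpow_neg_one]
  · have hI : ∫⁻ r in Ioo (0:ℝ) 1,
        ENNReal.ofReal ((1 - r) ^ (p - 2) * (1 - r + (1 - ‖w‖)) ^ (1 - p)) ≤
        ENNReal.ofReal (1 / (p - 1) + 2 * L) := by
      calc _ ≤ ∫⁻ r in Ioo (0:ℝ) 1, (ENNReal.ofReal ((1 - ‖w‖) * (1 - r) ^ (p - 2) *
              (1 - r + (1 - ‖w‖)) ^ (-p)) + ENNReal.ofReal ((1 - r + (1 - ‖w‖))⁻¹)) := by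
            refine setLIntegral_mono' measurableSet_Ioo fun r hr => ?_
            have hs : 0 < 1 - r := by linarith [hr.2]
            set s := 1 - r with hsd
            set δ := 1 - ‖w‖ with hδd
            rw [← ENNReal.ofReal_add (by positivity) (by positivity)]
            refine ENNReal.ofReal_le_ofReal ?_
            have e1 : (s + δ) ^ (1 - p) = (s + δ) * (s + δ) ^ (-p) := by
              rw [sub_eq_add_neg, Real.rpow_add (by positivity), Real.rpow_one]
            have e2 : s ^ (p - 2) * s = s ^ (p - 1) := by
              rw [← Real.rpow_add_one hs.ne']; congr 1; ring
            have e3 : s ^ (p - 1) ≤ (s + δ) ^ (p - 1) :=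
              Real.rpow_le_rpow hs.le (by linarith) hp1.le
            have e4 : (s + δ) ^ (p - 1) * (s + δ) ^ (-p) = (s + δ)⁻¹ := by
              rw [← Real.rpow_add (by positivity), ← Real.rpow_neg_one]; congr 1; ring
            have e5 : 0 < (s + δ) ^ (-p) := by positivity
            calc s ^ (p - 2) * (s + δ) ^ (1 - p) =
                  δ * s ^ (p - 2) * (s + δ) ^ (-p) + s ^ (p - 2) * s * (s + δ) ^ (-p) := by
                  rw [e1]; ring
              _ ≤ _ := by
                  rw [e2, ← e4]; gcongr
        _ = _ := lintegral_add_right _ (by fun_prop)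
        _ ≤ ENNReal.ofReal (1 / (p - 1)) + ENNReal.ofReal (2 * L) := by
            refine add_le_add (rad1 p _ hp hδ) ?_
            rw [rad2 _ hδ]
            exact ENNReal.ofReal_le_ofReal hlog
        _ = _ := (ENNReal.ofReal_add (by positivity) (by positivity)).symm
    calc _ ≤ ENNReal.ofReal L⁻¹ * (ENNReal.ofReal (20 ^ p * (2 / (p - 1))) *
            ENNReal.ofReal (1 / (p - 1) + 2 * L)) := by gcongr
      _ = ENNReal.ofReal (L⁻¹ * ((20 ^ p * (2 / (p - 1))) * (1 / (p - 1) + 2 * L))) := by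
          rw [ENNReal.ofReal_mul (p := L⁻¹) (by positivity),
            ENNReal.ofReal_mul (q := 1 / (p - 1) + 2 * L) (by positivity)]
      _ ≤ _ := by
          refine ENNReal.ofReal_le_ofReal ?_
          rw [mul_left_comm]
          gcongr
          calc L⁻¹ * (1 / (p - 1) + 2 * L) = 1 / (p - 1) / L + 2 := by field_simp
            _ ≤ _ := by gcongr

lemma const_besov (p : ℝ) (hp : 1 < p) : (fun _ : ℂ => (1:ℂ)) ∈ Besov p := by
  rw [besov_iff]
  refine ⟨differentiableOn_const _, ?_⟩
  have : ∀ z : ℂ, bdens p (fun _ : ℂ => (1:ℂ)) z = 0 := by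
    intro z
    simp [bdens, Real.zero_rpow (show p ≠ 0 by linarith)]
  simp [this]

theorem nec (p a : ℝ) (hp : 1 < p) (ha : a = 1 - 1 / p) (g : ℂ → ℂ) (hg : HolOn g)
    (hmap : MapsInto (Mg g) (Besov p) Bloch) : g ∈ Hinf ∩ BlochLog a := by
  have hball : ∀ {w : ℂ}, w ∈ ball (0:ℂ) 1 → ‖w‖ < 1 := fun {w} hw => by simpa using hw
  obtain ⟨_, C0, hC0⟩ := hmap _ (const_besov p hp)
  have hM1 : Mg g (fun _ : ℂ => (1:ℂ)) = g := by ext z; simp [Mg]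
  rw [hM1] at hC0
  obtain ⟨C1, hC1⟩ := bs_fam p hp g hg hmap hT (fun w hw => hT_hol w (hball hw)) 2 _
    (fun w hw z hz => hT_bd w z (hball hw) (hball hz))
    (fun w hw z hz => hT_dbd w z (hball hw) (hball hz))
    (fun w hw => hT_K p hp w (hball hw))
  obtain ⟨C2, hC2⟩ := bs_fam p hp g hg hmap (fT p) (fun w hw => fT_hol p w (hball hw)) _ _
    (fun w hw z hz => fT_bd p hp w z (hball hw) (hball hz))
    (fun w hw z hz => fT_dbd p hp w z (hball hw) (hball hz))
    (fun w hw => fT_K p hp w (hball hw))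
  obtain ⟨M0, hM0⟩ := (isCompact_closedBall (0:ℂ) (1/2)).exists_bound_of_continuousOn
    (hg.continuousOn.mono (closedBall_subset_ball (by norm_num)))
  have hb : ∃ C : ℝ, ∀ z ∈ ball (0:ℂ) 1, ‖g z‖ ≤ C := by
    refine ⟨max M0 (2 * (C0 + C1)), fun w hw => ?_⟩
    have hw1 := hball hw
    rcases le_total ‖w‖ (1/2) with h | h
    · exact (hM0 w (by simpa using h)).trans (le_max_left _ _)
    refine le_trans ?_ (le_max_right _ _)
    have hd : 0 < 1 - ‖w‖ ^ 2 := by nlinarith [norm_nonneg w]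
    have h1 := hC1 w hw
    rw [deriv_Mg g _ hg (hT_hol w hw1) w hw, (hT_deriv w w hw1 hw1).deriv, hT, self_ker] at h1
    have hdc : ((1 - ‖w‖ ^ 2 : ℝ) : ℂ) ≠ 0 := by exact_mod_cast hd.ne'
    have h2 : (1 - ‖w‖ ^ 2) * ‖deriv g w * (((1 - ‖w‖ ^ 2 : ℝ) : ℂ) / ((1 - ‖w‖ ^ 2 : ℝ) : ℂ)) +
        g w * (((1 - ‖w‖ ^ 2 : ℝ) : ℂ) * (starRingEnd ℂ) w / ((1 - ‖w‖ ^ 2 : ℝ) : ℂ) ^ 2)‖ =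
        ‖((1 - ‖w‖ ^ 2 : ℝ) : ℂ) * deriv g w + g w * (starRingEnd ℂ) w‖ := by
      have hn : ‖((1 - ‖w‖ ^ 2 : ℝ) : ℂ)‖ = 1 - ‖w‖ ^ 2 := by
        rw [Complex.norm_real, Real.norm_of_nonneg hd.le]
      generalize ((1 - ‖w‖ ^ 2 : ℝ) : ℂ) = d at hn hdc ⊢
      rw [← hn, ← norm_mul]
      congr 1
      field_simp
    rw [h2] at h1
    have h3 := hC0 w hw
    have h4 : ‖g w‖ * ‖w‖ ≤ C0 + C1 := by
      calc ‖g w‖ * ‖w‖ = ‖(((1 - ‖w‖ ^ 2 : ℝ) : ℂ) * deriv g w + g w * (starRingEnd ℂ) w) -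
            ((1 - ‖w‖ ^ 2 : ℝ) : ℂ) * deriv g w‖ := by
            rw [add_sub_cancel_left, norm_mul, RCLike.norm_conj]
        _ ≤ _ := norm_sub_le _ _
        _ ≤ C1 + C0 := by
            refine add_le_add h1 ?_
            rwa [norm_mul, Complex.norm_real, Real.norm_of_nonneg hd.le]
        _ = _ := add_comm _ _
    nlinarith [norm_nonneg (g w)]
  refine ⟨⟨hg, hb⟩, hg, ?_⟩
  obtain ⟨M, hM⟩ := hb
  refine ⟨C2 + M * Real.log 2 ^ (-(1 / p)), fun w hw => ?_⟩
  have hw1 := hball hw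
  have hM' : 0 ≤ M := (norm_nonneg _).trans (hM w hw)
  have hd : 0 < 1 - ‖w‖ ^ 2 := by nlinarith [norm_nonneg w]
  have h1 := hC2 w hw
  have h2 := fT_dnorm p w w hw1 hw1
  have h3 := Lp_bd p hp w hw1
  have hL : 0 < Real.log (2 / (1 - ‖w‖ ^ 2)) := log2_pos.trans_le (L_pos w hw1)
  have hf : fT p w w = ((Real.log (2 / (1 - ‖w‖ ^ 2)) ^ a : ℝ) : ℂ) := by
    rw [fT, self_ker, ← Complex.ofReal_log hd.le, ← Complex.ofReal_sub, ← Complex.ofReal_mul,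
      ← Real.log_div (by norm_num) hd.ne', ← Real.rpow_add_one hL.ne', ha]
    congr 2; ring
  rw [deriv_Mg g _ hg (fT_hol p w hw1) w hw, hf] at h1
  rw [self_ker, Complex.norm_real, Real.norm_of_nonneg hd.le] at h2
  have h5 : (1 - ‖w‖ ^ 2) * ‖deriv (fT p w) w‖ ≤ Real.log 2 ^ (-(1 / p)) := by
    calc _ ≤ (1 - ‖w‖ ^ 2) * (Real.log (2 / (1 - ‖w‖ ^ 2)) ^ (-(1 / p)) * (1 - ‖w‖ ^ 2)⁻¹) := by
          gcongr
      _ = Real.log (2 / (1 - ‖w‖ ^ 2)) ^ (-(1 / p)) := by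
          rw [mul_left_comm, mul_inv_cancel₀ hd.ne', mul_one]
      _ ≤ _ := h3
  set X := deriv g w * ((Real.log (2 / (1 - ‖w‖ ^ 2)) ^ a : ℝ) : ℂ) with hX
  have hXn : ‖X‖ = ‖deriv g w‖ * Real.log (2 / (1 - ‖w‖ ^ 2)) ^ a := by
    rw [hX, norm_mul, Complex.norm_real, Real.norm_of_nonneg (by positivity)]
  have h6 : ‖X‖ ≤ ‖X + g w * deriv (fT p w) w‖ + ‖g w‖ * ‖deriv (fT p w) w‖ := by
    rw [← norm_mul]
    have := norm_sub_le (X + g w * deriv (fT p w) w) (g w * deriv (fT p w) w)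
    rwa [add_sub_cancel_right] at this
  calc _ = (1 - ‖w‖ ^ 2) * ‖X‖ := by rw [hXn]; ring
    _ ≤ (1 - ‖w‖ ^ 2) * (‖X + g w * deriv (fT p w) w‖ + ‖g w‖ * ‖deriv (fT p w) w‖) := by gcongr
    _ = (1 - ‖w‖ ^ 2) * ‖X + g w * deriv (fT p w) w‖ +
        ‖g w‖ * ((1 - ‖w‖ ^ 2) * ‖deriv (fT p w) w‖) := by ring
    _ ≤ _ := add_le_add h1 (mul_le_mul (hM w hw) h5 (by positivity) hM')

/-- For `1 < p < ∞` with conjugate exponent `p'` and `g` holomorphic on the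
unit disc, `M_g` maps `Bᵖ` into the Bloch space iff `g ∈ H^∞ ∩ 𝓑_{log,1/p'}`. -/
theorem stmt3 (p p' : ℝ) (hp : 1 < p) (hpp' : 1 / p + 1 / p' = 1)
    (g : ℂ → ℂ) (hg : HolOn g) :
    MapsInto (Mg g) (Besov p) Bloch ↔ g ∈ Hinf ∩ BlochLog (1 / p') := by
  have ha : 1 / p' = 1 - 1 / p := by linarith
  exact ⟨nec p (1 / p') hp ha g hg, suff p (1 / p') hp ha g⟩
end

section
/- Suppose 1 < p < ∞, let p' be the conjugate exponent of p, and let g be holomorphic on the unit disc D. Then the following are equivalent: (a) the Volterra operator T_g maps the Besov space B^p into the Bloch space 𝓑; (b) g ∈ 𝓑_{log,1/p'}; (c) T_g maps B^p into the little Bloch space 𝓑_0. -/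
open MeasureTheory Metric Complex Real Filter Set

lemma Tg_spec {g f : ℂ → ℂ} (hg : HolOn g) (hf : HolOn f) :
    HolOn (Tg g f) ∧ ∀ z ∈ ball (0:ℂ) 1, deriv (Tg g f) z = deriv g z * f z := by
  have hg' : DifferentiableOn ℂ (deriv g) (ball (0:ℂ) 1) := hg.deriv isOpen_ball
  have hh : DifferentiableOn ℂ (fun z => deriv g z * f z) (ball (0:ℂ) 1) := hg'.mul hf
  obtain ⟨F, hF⟩ := hh.isExactOn_ball
  have key : ∀ z ∈ ball (0:ℂ) 1, Tg g f z = F z - F 0 := by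
    intro z hz
    have hmem : ∀ t ∈ uIcc (0:ℝ) 1, (t:ℂ) * z ∈ ball (0:ℂ) 1 := by
      intro t ht
      rw [uIcc_of_le zero_le_one] at ht
      simp only [mem_ball, dist_zero_right, norm_mul, norm_real, Real.norm_eq_abs] at hz ⊢
      rw [abs_of_nonneg ht.1]
      nlinarith [norm_nonneg z, ht.2]
    have h1 : ∀ t ∈ uIcc (0:ℝ) 1, HasDerivAt (fun t : ℝ => F ((t:ℂ) * z))
        (z * (deriv g ((t : ℂ) * z) * f ((t : ℂ) * z))) t := by
      intro t ht
      have a := hF _ (hmem t ht)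
      have b : HasDerivAt (fun t : ℝ => (t:ℂ) * z) z t := by
        simpa using (Complex.ofRealCLM.hasDerivAt (x := t)).mul_const z
      have := a.comp t b
      rw [mul_comm]; exact this
    have hc : ContinuousOn (fun t : ℝ => z * (deriv g ((t : ℂ) * z) * f ((t : ℂ) * z)))
        (uIcc (0:ℝ) 1) := by
      apply continuousOn_const.mul
      exact hh.continuousOn.comp (by fun_prop) hmem
    have := intervalIntegral.integral_eq_sub_of_hasDerivAt h1 hc.intervalIntegrable
    rw [intervalIntegral.integral_const_mul] at this
    simpa [Tg] using this
  have hd : ∀ z ∈ ball (0:ℂ) 1, HasDerivAt (Tg g f) (deriv g z * f z) z := by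
    intro z hz
    refine ((hF z hz).sub_const (F 0)).congr_of_eventuallyEq ?_
    filter_upwards [isOpen_ball.mem_nhds hz] with w hw using key w hw
  exact ⟨fun z hz => (hd z hz).differentiableAt.differentiableWithinAt,
    fun z hz => (hd z hz).deriv⟩

lemma littleBloch_sub : littleBloch ⊆ Bloch := by
  rintro f ⟨hf, h⟩
  refine ⟨hf, ?_⟩
  obtain ⟨r, hr, hb⟩ := h 1 one_pos
  have hd : ContinuousOn (fun z => (1 - ‖z‖ ^ 2) * ‖deriv f z‖) (closedBall (0:ℂ) r) := by
    apply ContinuousOn.mul (by fun_prop)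
    exact ((hf.deriv isOpen_ball).continuousOn.mono (closedBall_subset_ball hr)).norm
  obtain ⟨C, hC⟩ := (isCompact_closedBall (0:ℂ) r).bddAbove_image hd
  refine ⟨max C 1, fun z hz => ?_⟩
  by_cases hzr : r < ‖z‖
  · exact (hb z hz hzr).le.trans (le_max_right _ _)
  · exact (hC (mem_image_of_mem _ (by simpa using hzr))).trans (le_max_left _ _)

lemma polar_ball {G : ℂ → ENNReal} (hG : Measurable G) (R : ℝ) :
    ∫⁻ z in ball (0:ℂ) R, G z = ∫⁻ r in Ioo 0 R, ENNReal.ofReal r *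
      ∫⁻ θ in Ioo (-π) π, G (r * (Real.cos θ + Real.sin θ * Complex.I)) := by
  rw [← lintegral_indicator measurableSet_ball, ← Complex.lintegral_comp_polarCoord_symm]
  rw [polarCoord_target, Measure.volume_eq_prod]
  have hm : Measurable fun p : ℝ × ℝ => ENNReal.ofReal p.1 •
      (ball (0:ℂ) R).indicator G (Complex.polarCoord.symm p) := by
    simp only [Complex.polarCoord_symm_apply]
    refine Measurable.smul (f := fun p : ℝ × ℝ => ENNReal.ofReal p.1) (by fun_prop) ?_
    exact (hG.indicator measurableSet_ball).comp (by fun_prop)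
  rw [setLIntegral_prod _ hm.aemeasurable]
  rw [← lintegral_indicator measurableSet_Ioi, ← lintegral_indicator measurableSet_Ioo]
  congr 1 with r
  by_cases hr : 0 < r
  · rw [indicator_of_mem (by exact hr)]
    by_cases hrR : r < R
    · rw [indicator_of_mem (by exact ⟨hr, hrR⟩), ← lintegral_const_mul]
      · apply lintegral_congr
        intro θ
        rw [indicator_of_mem]
        · simp
        · rw [mem_ball, dist_zero_right, Complex.norm_polarCoord_symm, abs_of_pos hr]; exact hrR
      · exact hG.comp (by fun_prop)
    · rw [indicator_of_notMem (by simp [hrR])]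
      rw [lintegral_eq_zero_iff']
      · apply ae_of_all
        intro θ
        simp only [Pi.zero_apply]
        rw [indicator_of_notMem]
        · simp
        · rw [mem_ball, dist_zero_right, Complex.norm_polarCoord_symm, abs_of_pos hr]; exact hrR
      · exact (hm.comp (measurable_prodMk_left)).aemeasurable
  · rw [indicator_of_notMem (by simpa using hr), indicator_of_notMem (by simp [hr])]

lemma circ_mean_s4 {F : ℂ → ℂ} {w : ℂ} {R : ℝ} (hR : 0 < R)
    (hF : DifferentiableOn ℂ F (ball w R)) : 
    ∀ r ∈ Ioo 0 R, ‖F w‖ₑ * ENNReal.ofReal (2 * π) ≤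
      ∫⁻ θ in Ioo (-π) π, ‖F (w + r * (Real.cos θ + Real.sin θ * Complex.I))‖ₑ := by
    intro r hr
    have h0 : DiffContOnCl ℂ F (ball w |r|) := by
      apply (hF.mono _).diffContOnCl
      rw [closure_ball _ (by simpa using hr.1.ne'), abs_of_pos hr.1]
      exact closedBall_subset_ball hr.2
    have h1 := h0.circleAverage
    rw [circleAverage_eq_integral_add (-π), intervalIntegral.integral_comp_add_right (fun θ ↦ F (circleMap w r θ)),
      show 0 + -π = -π by ring, show 2 * π + -π = π by ring,
      intervalIntegral.integral_of_le (by linarith [pi_pos])] at h1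
    rw [← h1, enorm_smul, mul_comm, ← mul_assoc]
    have : ENNReal.ofReal (2 * π) * ‖(2 * π)⁻¹‖ₑ = 1 := by
      rw [← ofReal_norm, ← ENNReal.ofReal_mul (by positivity), Real.norm_of_nonneg (by positivity),
        mul_inv_cancel₀ (by positivity)]; simp
    rw [this, one_mul, ← restrict_Ioo_eq_restrict_Ioc]
    refine (enorm_integral_le_lintegral_enorm _).trans (le_of_eq ?_)
    apply lintegral_congr
    intro θ
    simp [circleMap, Complex.exp_mul_I]

lemma disc_polar {F : ℂ → ℂ} {w : ℂ} {R : ℝ} (hR : 0 < R)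
    (hF : DifferentiableOn ℂ F (ball w R)) : ∫⁻ z in ball w R, ‖F z‖ₑ = ∫⁻ r in Ioo 0 R, ENNReal.ofReal r *
      ∫⁻ θ in Ioo (-π) π, ‖F (w + r * (Real.cos θ + Real.sin θ * Complex.I))‖ₑ := by
  have hm : Measurable ((ball w R).indicator F) := by
    classical
    rw [← piecewise_eq_indicator]
    exact (hF.continuousOn.measurable_piecewise (g := 0) continuous_zero.continuousOn measurableSet_ball)
  rw [← (measurePreserving_add_left volume w).setLIntegral_comp_preimage_emb (MeasurableEquiv.addLeft w).measurableEmbedding]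
  have hpre : (fun x => w + x) ⁻¹' ball w R = ball 0 R := by ext; simp
  rw [hpre]
  trans ∫⁻ z in ball 0 R, ‖(ball w R).indicator F (w + z)‖ₑ
  · apply setLIntegral_congr_fun measurableSet_ball
    intro z hz
    simp only
    rw [indicator_of_mem]
    simpa using hz
  rw [polar_ball (G := fun z => ‖(ball w R).indicator F (w + z)‖ₑ) (by fun_prop)]
  apply setLIntegral_congr_fun measurableSet_Ioo
  intro r hr
  simp only
  congr 1
  apply lintegral_congr
  intro θ
  rw [indicator_of_mem]
  have := Complex.norm_polarCoord_symm (r, θ)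
  rw [Complex.polarCoord_symm_apply, abs_of_pos hr.1] at this
  rw [mem_ball, dist_self_add_left, this]; exact hr.2

/-- area mean value inequality -/
lemma mean_disc {F : ℂ → ℂ} {w : ℂ} {R : ℝ} (hR : 0 < R)
    (hF : DifferentiableOn ℂ F (ball w R)) :
    ‖F w‖ₑ * ENNReal.ofReal (π * R ^ 2) ≤ ∫⁻ z in ball w R, ‖F z‖ₑ := by
  have h1 : ∀ r ∈ Ioo 0 R, ‖F w‖ₑ * ENNReal.ofReal (2 * π) ≤
      ∫⁻ θ in Ioo (-π) π, ‖F (w + r * (Real.cos θ + Real.sin θ * Complex.I))‖ₑ := by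
    exact circ_mean_s4 hR hF
  have h2 : ∫⁻ z in ball w R, ‖F z‖ₑ = ∫⁻ r in Ioo 0 R, ENNReal.ofReal r *
      ∫⁻ θ in Ioo (-π) π, ‖F (w + r * (Real.cos θ + Real.sin θ * Complex.I))‖ₑ := by
    exact disc_polar hR hF
  rw [h2]
  calc _ = ∫⁻ r in Ioo 0 R, ENNReal.ofReal r * (‖F w‖ₑ * ENNReal.ofReal (2 * π)) := by
        rw [lintegral_mul_const _ (by fun_prop)]
        have : ∫⁻ r in Ioo 0 R, ENNReal.ofReal r = ENNReal.ofReal (R^2/2) := by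
          rw [restrict_Ioo_eq_restrict_Ioc, ← ofReal_integral_eq_lintegral_ofReal]
          · rw [← intervalIntegral.integral_of_le hR.le]; simp
          · exact (intervalIntegrable_iff_integrableOn_Ioc_of_le hR.le).1
              (Continuous.intervalIntegrable (by fun_prop) _ _)
          · filter_upwards [ae_restrict_mem measurableSet_Ioc] with r hr using hr.1.le
        rw [this, mul_left_comm, ← ENNReal.ofReal_mul (by positivity)]
        congr 2; ring
    _ ≤ _ := by
        apply setLIntegral_mono' measurableSet_Ioo
        intro r hr
        gcongr
        exact h1 r hr


lemma mean_disc_p {F : ℂ → ℂ} {w : ℂ} {R p q : ℝ} (hpq : p.HolderConjugate q) (hR : 0 < R)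
    (hF : DifferentiableOn ℂ F (ball w R)) :
    ‖F w‖ₑ ^ p * ENNReal.ofReal (π * R ^ 2) ≤ ∫⁻ z in ball w R, ‖F z‖ₑ ^ p := by
  have h1 := mean_disc hR hF
  have hp := hpq.pos
  have hm : AEMeasurable (fun z => ‖F z‖ₑ) (volume.restrict (ball w R)) :=
    (hF.continuousOn.aemeasurable measurableSet_ball).enorm
  have h2 := ENNReal.lintegral_mul_le_Lp_mul_Lq (volume.restrict (ball w R)) hpq hm
    (aemeasurable_const (b := (1:ENNReal)))
  have hV : volume (ball w R) = ENNReal.ofReal (π * R ^ 2) := by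
    rw [Complex.volume_ball, mul_comm, ENNReal.ofReal_mul pi_pos.le, ← ENNReal.ofReal_pow hR.le,
      ← NNReal.coe_real_pi, ENNReal.ofReal_coe_nnreal]
  simp only [Pi.mul_apply, mul_one, ENNReal.one_rpow, lintegral_const, one_mul,
    Measure.restrict_apply MeasurableSet.univ, univ_inter, hV] at h2
  set V := ENNReal.ofReal (π * R ^ 2)
  have hV0 : V ≠ 0 := by simp only [V, ne_eq, ENNReal.ofReal_eq_zero, not_le]; positivity
  have hVt : V ≠ ⊤ := ENNReal.ofReal_ne_top
  have h3 := ENNReal.rpow_le_rpow (h1.trans h2) hp.le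
  rw [ENNReal.mul_rpow_of_nonneg _ _ hp.le, ENNReal.mul_rpow_of_nonneg _ _ hp.le,
    ← ENNReal.rpow_mul, ← ENNReal.rpow_mul, one_div_mul_cancel hp.ne', ENNReal.rpow_one] at h3
  have e : 1 / q * p = p - 1 := by
    have := hpq.inv_add_inv_eq_one
    have h5 : 1 / q = 1 - p⁻¹ := by rw [one_div]; linarith
    rw [h5, sub_mul, inv_mul_cancel₀ hp.ne']; ring
  rw [e] at h3
  have h4 : V ^ p = V * V ^ (p - 1) := by
    have := ENNReal.rpow_add 1 (p - 1) hV0 hVt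
    rw [ENNReal.rpow_one] at this
    rw [← this]; congr 1; ring
  rw [h4, ← mul_assoc] at h3
  have hW0 : V ^ (p-1) ≠ 0 := by
    simp [ENNReal.rpow_eq_zero_iff, hV0, hVt]
  exact (ENNReal.mul_le_mul_iff_left hW0 (ENNReal.rpow_ne_top_of_ne_zero hV0 hVt)).1 h3

lemma rpow_compare {x s : ℝ} (a : ℝ) (hx : 0 < x) (hs : 0 < s) (h1 : x ≤ 2 * s) (h2 : s ≤ 2 * x) :
    x ^ a ≤ 2 ^ |a| * s ^ a := by
  have : (x / s) ^ a ≤ 2 ^ |a| := by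
    have hy : 0 < x / s := by positivity
    rw [Real.rpow_def_of_pos hy, Real.rpow_def_of_pos two_pos]
    apply Real.exp_le_exp.2
    have hl : |Real.log (x/s)| ≤ Real.log 2 := by
      rw [abs_le]
      constructor
      · rw [← Real.log_inv]
        apply Real.log_le_log (by norm_num)
        rw [le_div_iff₀ hs]; linarith
      · apply Real.log_le_log hy
        rw [div_le_iff₀ hs]; linarith
    calc _ ≤ |Real.log (x/s) * a| := le_abs_self _
      _ = |Real.log (x/s)| * |a| := abs_mul _ _
      _ ≤ _ := by gcongr
  rw [Real.div_rpow hx.le hs.le, div_le_iff₀ (by positivity)] at this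
  exact this

noncomputable def Wt (p : ℝ) (f : ℂ → ℂ) (z : ℂ) : ENNReal :=
  ENNReal.ofReal ((1 - ‖z‖) ^ (p - 2) * ‖deriv f z‖ ^ p)

lemma point_wt {f : ℂ → ℂ} (hf : HolOn f) {p q : ℝ} (hpq : p.HolderConjugate q) {w : ℂ}
    (hw : ‖w‖ < 1) :
    ‖deriv f w‖ₑ ^ p * ENNReal.ofReal ((1 - ‖w‖) ^ (p - 1)) ≤
      ENNReal.ofReal (2 ^ |p - 2| * (4 / π)) *
        ∫⁻ z in ball w ((1 - ‖w‖) / 2), ENNReal.ofReal ((1 - ‖w‖)⁻¹) * Wt p f z := by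
  set ρ := 1 - ‖w‖ with hρ
  have hρ0 : 0 < ρ := by linarith
  have hsub : ∀ z ∈ ball w (ρ/2), ρ / 2 ≤ 1 - ‖z‖ ∧ 1 - ‖z‖ ≤ 3 / 2 * ρ := by
    intro z hz
    rw [mem_ball, dist_eq_norm] at hz
    have a := norm_sub_norm_le z w
    have b := norm_sub_norm_le w z
    rw [norm_sub_rev] at b
    constructor <;> linarith
  have hd : DifferentiableOn ℂ (deriv f) (ball w (ρ/2)) := by
    apply (hf.deriv isOpen_ball).mono
    intro z hz
    have := (hsub z hz).1
    rw [mem_ball, dist_zero_right]; linarith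
  have h1 := mean_disc_p hpq (by positivity) hd
  have e1 : ENNReal.ofReal (ρ ^ (p-1)) = ENNReal.ofReal (π * (ρ/2)^2) * ENNReal.ofReal (4 / π * ρ^(p-3)) := by
    rw [← ENNReal.ofReal_mul (by positivity)]
    congr 1
    have : ρ ^ (p-1) = ρ^2 * ρ^(p-3) := by
      rw [← Real.rpow_natCast, ← Real.rpow_add hρ0]; congr 1; push_cast; ring
    rw [this]; field_simp; ring
  rw [e1, ← mul_assoc]
  calc _ ≤ (∫⁻ z in ball w (ρ/2), ‖deriv f z‖ₑ ^ p) * ENNReal.ofReal (4 / π * ρ^(p-3)) := by gcongr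
    _ = ∫⁻ z in ball w (ρ/2), ‖deriv f z‖ₑ ^ p * ENNReal.ofReal (4 / π * ρ^(p-3)) := by
        rw [lintegral_mul_const' _ _ ENNReal.ofReal_ne_top]
    _ ≤ ∫⁻ z in ball w (ρ/2), ENNReal.ofReal (2 ^ |p - 2| * (4 / π)) * (ENNReal.ofReal (ρ⁻¹) * Wt p f z) := by
        apply setLIntegral_mono' measurableSet_ball
        intro z hz
        obtain ⟨c1, c2⟩ := hsub z hz
        have hs : 0 < 1 - ‖z‖ := by linarith
        have := rpow_compare (p-2) hρ0 hs (by linarith) (by linarith)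
        unfold Wt
        rw [← ofReal_norm, ENNReal.ofReal_rpow_of_nonneg (norm_nonneg _) hpq.nonneg,
          ← ENNReal.ofReal_mul (by positivity), ← ENNReal.ofReal_mul (by positivity),
          ← ENNReal.ofReal_mul (by positivity)]
        apply ENNReal.ofReal_le_ofReal
        have e2 : ρ^(p-3) = ρ⁻¹ * ρ^(p-2) := by
          rw [← Real.rpow_neg_one, ← Real.rpow_add hρ0]; congr 1; ring
        rw [e2]
        calc _ = ‖deriv f z‖ ^ p * (4 / π) * ρ⁻¹ * ρ^(p-2) := by ring
          _ ≤ ‖deriv f z‖ ^ p * (4 / π) * ρ⁻¹ * (2 ^ |p - 2| * (1 - ‖z‖)^(p-2)) := by gcongr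
          _ = _ := by ring
    _ = _ := by rw [lintegral_const_mul' _ _ ENNReal.ofReal_ne_top]

lemma radial {f : ℂ → ℂ} (hf : HolOn f) {p q : ℝ} (hpq : p.HolderConjugate q) {e : ℂ}
    (he : ‖e‖ = 1) {r : ℝ} (hr : 0 ≤ r) :
    ∫⁻ t in Ioo r 1, ‖deriv f (t * e)‖ₑ ^ p * ENNReal.ofReal ((1 - t) ^ (p - 1)) ≤
      ENNReal.ofReal (2 ^ |p - 2| * (4 / π)) * (2 *
        ∫⁻ z in ball (0:ℂ) 1 \ closedBall 0 ((3 * r - 1) / 2), Wt p f z) := by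
  classical
  have hnorm : ∀ t ∈ Ioo r 1, ‖(t:ℂ) * e‖ = t := by
    intro t ht
    rw [norm_mul, he, mul_one, norm_real, Real.norm_of_nonneg (hr.trans ht.1.le)]
  have hWm : Measurable ((ball (0:ℂ) 1).indicator (Wt p f)) := by
    have hdm : Measurable ((ball (0:ℂ) 1).indicator (deriv f)) := by
      rw [← piecewise_eq_indicator]
      exact ((hf.deriv isOpen_ball).continuousOn.measurable_piecewise (g := 0)
        continuous_zero.continuousOn measurableSet_ball)
    have : (ball (0:ℂ) 1).indicator (Wt p f) = (ball (0:ℂ) 1).indicator (fun z => 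
        ENNReal.ofReal ((1 - ‖z‖) ^ (p - 2) * ‖(ball (0:ℂ) 1).indicator (deriv f) z‖ ^ p)) := by
      apply indicator_congr
      intro z hz
      simp only [indicator_of_mem hz, Wt]
    rw [this]
    exact Measurable.indicator (by fun_prop) measurableSet_ball
  set W := (ball (0:ℂ) 1).indicator (Wt p f) with hW
  let S : Set (ℝ × ℂ) := {x | ‖x.2 - x.1 * e‖ < (1 - x.1) / 2}
  have hS : MeasurableSet S := (isOpen_lt (by fun_prop) (by fun_prop)).measurableSet
  let k : ℝ → ℂ → ENNReal := fun t z => S.indicator (fun x => ENNReal.ofReal ((1 - x.1)⁻¹) * W x.2) (t, z)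
  have hk : Measurable (Function.uncurry k) := by
    have : Function.uncurry k = S.indicator (fun x => ENNReal.ofReal ((1 - x.1)⁻¹) * W x.2) := by
      ext ⟨t, z⟩; rfl
    rw [this]
    exact Measurable.indicator (by fun_prop) hS
  calc _ ≤ ∫⁻ t in Ioo r 1, ENNReal.ofReal (2 ^ |p - 2| * (4 / π)) * ∫⁻ z, k t z := by
        apply setLIntegral_mono' measurableSet_Ioo
        intro t ht
        have := point_wt hf hpq (w := t * e) (by rw [hnorm t ht]; exact ht.2)
        rw [hnorm t ht] at this
        refine this.trans (le_of_eq ?_)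
        congr 1
        rw [← lintegral_indicator measurableSet_ball]
        congr 1 with z
        by_cases hz : z ∈ ball ((t:ℂ) * e) ((1 - t)/2)
        · have hz' : (t, z) ∈ S := by simpa [S, dist_eq_norm] using hz
          have hz1 : z ∈ ball (0:ℂ) 1 := by
            rw [mem_ball, dist_eq_norm] at hz
            have a := norm_sub_norm_le z (t * e)
            rw [hnorm t ht] at a
            rw [mem_ball, dist_zero_right]; linarith [ht.2]
          simp only [k, indicator_of_mem hz, indicator_of_mem hz', W, indicator_of_mem hz1]
        · have hz' : (t, z) ∉ S := by simpa [S, dist_eq_norm] using hz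
          simp only [k, indicator_of_notMem hz, indicator_of_notMem hz']
    _ = ENNReal.ofReal (2 ^ |p - 2| * (4 / π)) * ∫⁻ z, ∫⁻ t in Ioo r 1, k t z := by
        rw [lintegral_const_mul' _ _ ENNReal.ofReal_ne_top, lintegral_lintegral_swap hk.aemeasurable]
    _ ≤ _ := by
        gcongr
        rw [← lintegral_const_mul' _ _ (by simp), 
          ← lintegral_indicator (measurableSet_ball.diff measurableSet_closedBall)]
        apply lintegral_mono
        intro z
        by_cases hz : z ∈ ball (0:ℂ) 1 \ closedBall 0 ((3 * r - 1) / 2)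
        · simp only [indicator_of_mem hz]
          have hs : 0 < 1 - ‖z‖ := by simpa using hz.1
          set s := 1 - ‖z‖ with hs'
          calc _ ≤ ∫⁻ t in Ioo r 1, (Ioo (1 - 2 * s) (1 - 2 * s / 3)).indicator
                  (fun _ => ENNReal.ofReal (3 / (2 * s)) * Wt p f z) t := by
                apply setLIntegral_mono' measurableSet_Ioo
                intro t ht
                by_cases hm : (t, z) ∈ S
                · have hm' : ‖z - t * e‖ < (1 - t)/2 := hm
                  have a := norm_sub_norm_le z (t * e)
                  have b := norm_sub_norm_le (t * e) z
                  rw [norm_sub_rev] at b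
                  rw [hnorm t ht] at a b
                  have hmem : t ∈ Ioo (1 - 2 * s) (1 - 2 * s / 3) := by constructor <;> linarith
                  simp only [k, indicator_of_mem hm, indicator_of_mem hmem, W, indicator_of_mem hz.1]
                  gcongr
                  rw [inv_eq_one_div, div_le_div_iff₀ (by linarith [ht.2]) (by positivity)]
                  linarith [hmem.2]
                · simp only [k, indicator_of_notMem hm]; exact zero_le
            _ ≤ ∫⁻ t, (Ioo (1 - 2 * s) (1 - 2 * s / 3)).indicator
                  (fun _ => ENNReal.ofReal (3 / (2 * s)) * Wt p f z) t := setLIntegral_le_lintegral _ _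
            _ = _ := by
                rw [lintegral_indicator measurableSet_Ioo, setLIntegral_const, Real.volume_Ioo,
                  mul_right_comm, ← ENNReal.ofReal_mul (by positivity)]
                congr 1
                rw [show 3 / (2 * s) * (1 - 2 * s / 3 - (1 - 2 * s)) = 2 by field_simp; ring]
                simp
        · simp only [indicator_of_notMem hz]
          refine le_of_eq ?_
          rw [lintegral_eq_zero_iff (hk.of_uncurry_right)]
          filter_upwards [ae_restrict_mem measurableSet_Ioo] with t ht
          by_cases hm : (t, z) ∈ S
          · simp only [k, indicator_of_mem hm, W, Pi.zero_apply]
            rw [indicator_of_notMem, mul_zero]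
            intro hz1
            apply hz
            refine ⟨hz1, ?_⟩
            have hm' : ‖z - t * e‖ < (1 - t)/2 := hm
            have b := norm_sub_norm_le (t * e) z
            rw [norm_sub_rev, hnorm t ht] at b
            rw [mem_closedBall, dist_zero_right, not_le]; linarith [ht.1]
          · simp only [k, indicator_of_notMem hm, Pi.zero_apply]


lemma log_int {r s : ℝ} (hr : 0 ≤ r) (hrs : r ≤ s) (hs : s < 1) :
    ∫⁻ t in Ioo r s, ENNReal.ofReal ((1 - t)⁻¹) ≤ ENNReal.ofReal (Real.log (2 / (1 - s ^ 2))) := by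
  have hc : ContinuousOn (fun t : ℝ => (1 - t)⁻¹) (uIcc r s) := by
    apply ContinuousOn.inv₀ (by fun_prop)
    intro t ht
    rw [uIcc_of_le hrs] at ht
    have := ht.2
    intro h; linarith
  have hi : ∫ t in r..s, (1 - t)⁻¹ = Real.log (1 - r) - Real.log (1 - s) := by
    have hd : ∀ t ∈ uIcc r s, HasDerivAt (fun t : ℝ => - Real.log (1 - t)) ((1 - t)⁻¹) t := by
      intro t ht
      rw [uIcc_of_le hrs] at ht
      have h0 : 1 - t ≠ 0 := by have := ht.2; intro h; linarith
      have := (((hasDerivAt_id t).const_sub 1).log h0).neg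
      convert! this using 1
      simp only [id]; field_simp
    rw [intervalIntegral.integral_eq_sub_of_hasDerivAt hd hc.intervalIntegrable]; ring
  rw [restrict_Ioo_eq_restrict_Ioc, ← ofReal_integral_eq_lintegral_ofReal]
  · rw [← intervalIntegral.integral_of_le hrs, hi]
    apply ENNReal.ofReal_le_ofReal
    have h1 : Real.log (1 - r) ≤ 0 := Real.log_nonpos (by linarith) (by linarith)
    have h2 : Real.log (2 / (1 - s^2)) = Real.log (2 / (1 + s)) - Real.log (1 - s) := by
      rw [← Real.log_div (div_pos two_pos (by linarith)).ne' (by linarith)]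
      congr 1
      rw [div_div]; congr 1; ring
    have h3 : 0 ≤ Real.log (2 / (1 + s)) := by
      apply Real.log_nonneg
      rw [le_div_iff₀ (by linarith)]; linarith
    linarith
  · exact (intervalIntegrable_iff_integrableOn_Ioc_of_le hrs).1 hc.intervalIntegrable
  · filter_upwards [ae_restrict_mem measurableSet_Ioc] with t ht
    have := ht.2
    exact inv_nonneg.2 (by linarith)

lemma growth_s4 {f : ℂ → ℂ} (hf : HolOn f) {p q : ℝ} (hpq : p.HolderConjugate q) {e : ℂ}
    (he : ‖e‖ = 1) {r s : ℝ} (hr : 0 ≤ r) (hrs : r ≤ s) (hs : s < 1) :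
    ‖f (s * e) - f (r * e)‖ₑ ≤ (ENNReal.ofReal (2 ^ |p - 2| * (4 / π)) * (2 *
        ∫⁻ z in ball (0:ℂ) 1 \ closedBall 0 ((3 * r - 1) / 2), Wt p f z)) ^ (1 / p) *
        ENNReal.ofReal (Real.log (2 / (1 - s ^ 2))) ^ (1 / q) := by
  have hp := hpq.pos
  have hmem : ∀ t ∈ Icc r s, (t:ℂ) * e ∈ ball (0:ℂ) 1 := by
    intro t ht
    rw [mem_ball, dist_zero_right, norm_mul, he, mul_one, norm_real, Real.norm_of_nonneg (hr.trans ht.1)]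
    linarith [ht.2]
  have hc : ContinuousOn (fun t : ℝ => deriv f (t * e)) (Icc r s) :=
    (hf.deriv isOpen_ball).continuousOn.comp (by fun_prop) hmem
  have hd : ∀ t ∈ uIcc r s, HasDerivAt (fun t : ℝ => f (t * e)) (deriv f (t * e) * e) t := by
    intro t ht
    rw [uIcc_of_le hrs] at ht
    have a := (hf.differentiableAt (isOpen_ball.mem_nhds (hmem t ht))).hasDerivAt
    have b : HasDerivAt (fun t : ℝ => (t:ℂ) * e) e t := by
      simpa using (Complex.ofRealCLM.hasDerivAt (x := t)).mul_const e
    exact a.comp t b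
  have hi : IntervalIntegrable (fun t : ℝ => deriv f (t * e) * e) volume r s := by
    apply ContinuousOn.intervalIntegrable
    rw [uIcc_of_le hrs]
    exact hc.mul continuousOn_const
  have h1 := intervalIntegral.integral_eq_sub_of_hasDerivAt hd hi
  rw [← h1, intervalIntegral.integral_of_le hrs, ← restrict_Ioo_eq_restrict_Ioc]
  refine (enorm_integral_le_lintegral_enorm _).trans ?_
  have hm1 : AEMeasurable (fun t : ℝ => ‖deriv f (t * e)‖ₑ * ENNReal.ofReal ((1 - t) ^ ((p - 1) / p)))
      (volume.restrict (Ioo r s)) := by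
    refine AEMeasurable.mul (f := fun t : ℝ => ‖deriv f (t * e)‖ₑ)
      (g := fun t : ℝ => ENNReal.ofReal ((1 - t) ^ ((p - 1) / p))) ?_ (by fun_prop)
    exact ((hc.mono Ioo_subset_Icc_self).aemeasurable measurableSet_Ioo).enorm
  have hm2 : AEMeasurable (fun t : ℝ => ENNReal.ofReal ((1 - t) ^ (- ((p - 1) / p))))
      (volume.restrict (Ioo r s)) := by fun_prop
  have h2 := ENNReal.lintegral_mul_le_Lp_mul_Lq _ hpq hm1 hm2
  have e0 : ∫⁻ t in Ioo r s, ‖deriv f (t * e) * e‖ₑ = ∫⁻ t in Ioo r s,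
      ((fun t : ℝ => ‖deriv f (t * e)‖ₑ * ENNReal.ofReal ((1 - t) ^ ((p - 1) / p))) *
      (fun t : ℝ => ENNReal.ofReal ((1 - t) ^ (- ((p - 1) / p))))) t := by
    apply setLIntegral_congr_fun measurableSet_Ioo
    intro t ht
    have ht1 : 0 < 1 - t := by linarith [ht.2]
    simp only [Pi.mul_apply]
    rw [mul_assoc, ← ENNReal.ofReal_mul (by positivity), ← Real.rpow_add ht1, add_neg_cancel,
      Real.rpow_zero, ENNReal.ofReal_one, mul_one, enorm_mul, ← ofReal_norm e, he]
    simp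
  rw [e0]
  refine h2.trans ?_
  gcongr
  · refine le_trans ?_ (radial hf hpq he hr)
    refine (lintegral_mono_set (Ioo_subset_Ioo_right hs.le)).trans ?_
    apply setLIntegral_mono' measurableSet_Ioo
    intro t ht
    have ht1 : 0 < 1 - t := by linarith [ht.2]
    rw [ENNReal.mul_rpow_of_nonneg _ _ hp.le, ENNReal.ofReal_rpow_of_nonneg (by positivity) hp.le,
      ← Real.rpow_mul ht1.le, div_mul_cancel₀ _ hp.ne']
  · exact one_div_nonneg.2 hpq.symm.nonneg
  · refine le_trans ?_ (log_int hr hrs hs)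
    apply setLIntegral_mono' measurableSet_Ioo
    intro t ht
    have ht1 : 0 < 1 - t := by linarith [ht.2]
    rw [ENNReal.ofReal_rpow_of_nonneg (by positivity) hpq.symm.nonneg,
      ← Real.rpow_mul ht1.le, ← Real.rpow_neg_one]
    apply le_of_eq
    congr 2
    have h5 := hpq.symm.sub_one_mul_conj
    have h6 := hpq.sub_one_mul_conj
    field_simp
    linarith

lemma tail_small {f : ℂ → ℂ} {p : ℝ} (hf : ∫⁻ z in ball (0:ℂ) 1, Wt p f z ≠ ⊤) {ε : ENNReal}
    (hε : ε ≠ 0) : ∃ r : ℝ, 0 ≤ r ∧ r < 1 ∧ 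
      ∫⁻ z in ball (0:ℂ) 1 \ closedBall 0 ((3 * r - 1) / 2), Wt p f z < ε := by
  obtain ⟨δ, hδ, h⟩ := exists_pos_setLIntegral_lt_of_measure_lt hf hε
  let A : ℕ → Set ℂ := fun n => ball (0:ℂ) 1 \ closedBall 0 ((3 * (1 - 1 / ((n:ℝ) + 1)) - 1) / 2)
  have hA : Antitone A := by
    intro m n hmn
    apply sdiff_subset_sdiff_right
    apply closedBall_subset_closedBall
    have : 1 / ((n:ℝ) + 1) ≤ 1 / ((m:ℝ) + 1) := by gcongr
    linarith
  have hAemp : ⋂ n, A n = ∅ := by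
    rw [eq_empty_iff_forall_notMem]
    intro z hz
    rw [mem_iInter] at hz
    have h1 : ‖z‖ < 1 := by simpa using (hz 0).1
    obtain ⟨n, hn⟩ := exists_nat_one_div_lt (sub_pos.2 h1)
    have h2 := (hz (2 * n + 1)).2
    rw [mem_closedBall, dist_zero_right, not_le] at h2
    have e1 : 1 / (((2 * n + 1 : ℕ) : ℝ) + 1) = 1 / ((n:ℝ) + 1) / 2 := by push_cast; field_simp; ring
    rw [e1] at h2
    linarith
  have ht := tendsto_measure_iInter_atTop (μ := volume) (s := A)
    (fun n => (measurableSet_ball.diff measurableSet_closedBall).nullMeasurableSet) hA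
    ⟨0, ((measure_mono sdiff_subset).trans_lt measure_ball_lt_top).ne⟩
  rw [hAemp, measure_empty] at ht
  obtain ⟨n, hn⟩ := (ht.eventually (gt_mem_nhds hδ)).exists
  have hpos : 0 < 1 / ((n:ℝ) + 1) := by positivity
  have hle : 1 / ((n:ℝ) + 1) ≤ 1 := by
    rw [div_le_one (by positivity)]; linarith [n.cast_nonneg (α := ℝ)]
  refine ⟨1 - 1 / ((n:ℝ) + 1), by linarith, by linarith, ?_⟩
  have := h (A n) (by
    refine (Measure.restrict_apply_le _ _).trans_lt hn)
  rwa [Measure.restrict_restrict (measurableSet_ball.diff measurableSet_closedBall),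
    inter_eq_left.2 sdiff_subset] at this

lemma Besov_wt {f : ℂ → ℂ} {p : ℝ} : f ∈ Besov p ↔ HolOn f ∧ ∫⁻ z in ball (0:ℂ) 1, Wt p f z ≠ ⊤ := by
  have h0 : (ENNReal.ofReal π)⁻¹ ≠ 0 := by simp
  have h1 : (ENNReal.ofReal π)⁻¹ ≠ ⊤ := by simp [pi_pos]
  simp only [Besov, mem_ofPred_eq, dA, Measure.restrict_smul, lintegral_smul_measure, smul_eq_mul]
  apply and_congr_right
  intro _
  rw [lt_top_iff_ne_top]
  simp only [ne_eq, ENNReal.mul_eq_top, h0, h1, not_false_eq_true, true_and, false_and, or_false]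
  rfl


lemma lam_pos {z : ℂ} (hz : ‖z‖ < 1) : Real.log 2 ≤ Real.log (2 / (1 - ‖z‖ ^ 2)) := by
  have h : 0 < 1 - ‖z‖ ^ 2 := by nlinarith [norm_nonneg z]
  apply Real.log_le_log two_pos
  rw [le_div_iff₀ h]; nlinarith [norm_nonneg z]

lemma b_to_c {g f : ℂ → ℂ} {p q : ℝ} (hpq : p.HolderConjugate q) (hg : g ∈ BlochLog (1 / q))
    (hf : f ∈ Besov p) : Tg g f ∈ littleBloch := by
  obtain ⟨hgh, C0, hC0⟩ := hg
  obtain ⟨hfh, hfi⟩ := Besov_wt.1 hf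
  obtain ⟨hT, hTd⟩ := Tg_spec hgh hfh
  refine ⟨hT, fun ε hε => ?_⟩
  have hp := hpq.pos
  have hq := hpq.symm.pos
  set C := max C0 1 with hCdef
  have hC1 : 1 ≤ C := le_max_right _ _
  have hC : ∀ z ∈ ball (0:ℂ) 1, (1 - ‖z‖ ^ 2) * (Real.log (2 / (1 - ‖z‖ ^ 2))) ^ (1/q) *
        ‖deriv g z‖ ≤ C := fun z hz => (hC0 z hz).trans (le_max_left _ _)
  set η := ε / (2 * C) with hη
  have hη0 : 0 < η := by positivity
  set K := ENNReal.ofReal (2 ^ |p - 2| * (4 / π)) with hK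
  have hK0 : K ≠ 0 := by simp only [hK, ne_eq, ENNReal.ofReal_eq_zero, not_le]; positivity
  have hKt : K ≠ ⊤ := ENNReal.ofReal_ne_top
  obtain ⟨r, hr0, hr1, htail⟩ := tail_small hfi (ε := ENNReal.ofReal η ^ p / (K * 2)) (by
    apply ENNReal.div_ne_zero.2
    refine ⟨?_, ENNReal.mul_ne_top hKt (by simp)⟩
    exact (ENNReal.rpow_pos (by simpa using hη0) ENNReal.ofReal_ne_top).ne')
  have hsmall : (K * (2 * ∫⁻ z in ball (0:ℂ) 1 \ closedBall 0 ((3 * r - 1) / 2), Wt p f z)) ^ (1 / p)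
      ≤ ENNReal.ofReal η := by
    rw [one_div, ENNReal.rpow_inv_le_iff hp, ← mul_assoc, mul_comm]
    exact (ENNReal.le_div_iff_mul_le (Or.inl (by simp [hK0])) (Or.inl (ENNReal.mul_ne_top hKt (by simp)))).1 htail.le
  obtain ⟨M0, hM0⟩ := (isCompact_closedBall (0:ℂ) r).bddAbove_image
    (hfh.continuousOn.mono (closedBall_subset_ball hr1)).norm
  set M := max M0 1
  have hM1 : 1 ≤ M := le_max_right _ _
  set N := 2 * C * M / ε + 1 with hN
  have hN0 : 0 < N := by positivity
  refine ⟨max r (1 - Real.exp (-(N ^ q))), max_lt hr1 (by simp [Real.exp_pos]), fun z hz hrz => ?_⟩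
  have hz1 : ‖z‖ < 1 := by simpa using hz
  have hzr : r < ‖z‖ := (le_max_left _ _).trans_lt hrz
  have hzN : 1 - Real.exp (-(N ^ q)) < ‖z‖ := (le_max_right _ _).trans_lt hrz
  have hz0 : 0 < ‖z‖ := hr0.trans_lt hzr
  set lam := Real.log (2 / (1 - ‖z‖ ^ 2)) with hlam
  have hl0 : 0 < lam := (Real.log_pos one_lt_two).trans_le (lam_pos hz1)
  have hD : 0 < 1 - ‖z‖ ^ 2 := by nlinarith
  have hlN : N ≤ lam ^ (1 / q) := by
    have h1 : N ^ q ≤ lam := by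
      rw [hlam, Real.le_log_iff_exp_le (by positivity), le_div_iff₀ hD]
      have : Real.exp (N^q) * Real.exp (-(N^q)) = 1 := by rw [← Real.exp_add]; simp
      nlinarith [Real.exp_pos (N^q)]
    calc N = (N ^ q) ^ (1/q) := by rw [← Real.rpow_mul hN0.le, mul_one_div_cancel hq.ne', Real.rpow_one]
      _ ≤ _ := by gcongr
  have hfz : ‖f z‖ ≤ M + η * lam ^ (1/q) := by
    set e := z / ‖z‖ with he
    have hzc : (‖z‖ : ℂ) ≠ 0 := by exact_mod_cast hz0.ne'
    have he1 : ‖e‖ = 1 := by rw [he, norm_div, norm_real, norm_norm, div_self hz0.ne']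
    have hze : (‖z‖ : ℂ) * e = z := by rw [he]; field_simp
    have h1 := growth_s4 hfh hpq he1 hr0 hzr.le hz1
    rw [hze] at h1
    have h2 : ‖f z - f (r * e)‖ₑ ≤ ENNReal.ofReal (η * lam ^ (1/q)) := by
      rw [ENNReal.ofReal_mul hη0.le, ← ENNReal.ofReal_rpow_of_nonneg hl0.le (by positivity)]
      exact h1.trans (by gcongr)
    rw [← ofReal_norm, ENNReal.ofReal_le_ofReal_iff (by positivity)] at h2
    have h3 : ‖f (r * e)‖ ≤ M := by
      refine le_trans (hM0 (mem_image_of_mem _ ?_)) (le_max_left _ _)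
      rw [mem_closedBall, dist_zero_right, norm_mul, he1, mul_one, norm_real, Real.norm_of_nonneg hr0]
    have h4 := norm_sub_norm_le (f z) (f (r * e))
    linarith
  rw [hTd z hz, norm_mul]
  have hCz := hC z hz
  rw [← hlam] at hCz
  set L := lam ^ (1/q) with hL
  have hLp : 0 < L := hN0.trans_le hlN
  set G := (1 - ‖z‖^2) * ‖deriv g z‖ with hG
  have hG0 : 0 ≤ G := by positivity
  have hGL : G * L ≤ C := by linarith [hCz]
  have hGM : G * M < ε / 2 := by
    have h1 : G * N ≤ C := (mul_le_mul_of_nonneg_left hlN hG0).trans hGL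
    have h2 : G * M * N ≤ C * M := by nlinarith
    have h3 : ε / 2 * N = C * M + ε / 2 := by rw [hN]; field_simp
    by_contra h
    push Not at h
    nlinarith
  calc (1 - ‖z‖^2) * (‖deriv g z‖ * ‖f z‖) = G * ‖f z‖ := by rw [hG]; ring
    _ ≤ G * (M + η * L) := by gcongr
    _ = G * M + η * (G * L) := by ring
    _ ≤ G * M + η * C := by gcongr
    _ = G * M + ε / 2 := by rw [hη]; field_simp
    _ < ε := by linarith


lemma norm_lower {x θ : ℝ} (hx0 : 0 ≤ x) (hx1 : x < 1) (hθ : |θ| ≤ π) :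
    1 - x + |θ| ≤ 5 * ‖(1:ℂ) - x * (Real.cos θ + Real.sin θ * Complex.I)‖ := by
  set N := ‖(1:ℂ) - x * (Real.cos θ + Real.sin θ * Complex.I)‖ with hN
  have hN0 : 0 ≤ N := norm_nonneg _
  have hN2 : N ^ 2 = (1 - x) ^ 2 + 2 * x * (1 - Real.cos θ) := by
    rw [hN, ← Complex.normSq_eq_norm_sq, Complex.normSq_apply]
    simp only [sub_re, one_re, mul_re, ofReal_re, add_re, I_re, mul_zero, ofReal_im, I_im, mul_one,
      sub_self, add_zero, add_im, mul_im, zero_add, zero_mul, sub_zero, sub_im, one_im, zero_sub]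
    nlinarith [Real.sin_sq_add_cos_sq θ]
  have hc := Real.cos_le_one_sub_mul_cos_sq hθ
  have hs : θ ^ 2 / π ^ 2 ≤ 1 := by
    rw [div_le_one (by positivity), ← sq_abs]; gcongr
  have h1 : 1 - x ≤ N := by
    have : 0 ≤ 2 * x * (1 - Real.cos θ) := by exact mul_nonneg (by positivity) (sub_nonneg.2 (Real.cos_le_one θ))
    exact (pow_le_pow_iff_left₀ (by linarith) hN0 two_ne_zero).1 (by linarith)
  have h2 : (|θ| / π) ^ 2 ≤ N ^ 2 := by
    rw [div_pow, sq_abs, hN2]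
    have e : 2 / π ^ 2 * θ ^ 2 = 2 * (θ^2 / π^2) := by ring
    rw [e] at hc
    set s := θ^2/π^2
    have hs0 : 0 ≤ s := by positivity
    nlinarith [mul_nonneg hx0 hs0, mul_nonneg (sq_nonneg (1-x)) (sub_nonneg.2 hs), mul_le_mul_of_nonneg_left hc hx0, mul_nonneg (sq_nonneg x) hs0]
  have h3 := (pow_le_pow_iff_left₀ (by positivity) hN0 two_ne_zero).1 h2
  rw [div_le_iff₀ pi_pos] at h3
  nlinarith [Real.pi_lt_four]

lemma theta_int {u p : ℝ} (hu : 0 < u) (hp : 1 < p) :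
    ∫⁻ θ in Ioo (-π) π, ENNReal.ofReal ((u + |θ|) ^ (-p)) ≤
      ENNReal.ofReal (2 / (p - 1) * u ^ (1 - p)) := by
  have hpos : ∀ θ : ℝ, 0 < u + |θ| := fun θ => by positivity
  have hc : Continuous fun θ : ℝ => (u + |θ|) ^ (-p) :=
    Continuous.rpow_const (by fun_prop) (fun θ => Or.inl (hpos θ).ne')
  have hpi := pi_pos
  rw [restrict_Ioo_eq_restrict_Ioc, ← ofReal_integral_eq_lintegral_ofReal]
  · apply ENNReal.ofReal_le_ofReal
    rw [← intervalIntegral.integral_of_le (by linarith),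
      ← intervalIntegral.integral_add_adjacent_intervals (b := 0) (hc.intervalIntegrable _ _) (hc.intervalIntegrable _ _)]
    have hE : 0 ≤ (u + π) ^ (1 - p) / (p - 1) := div_nonneg (by positivity) (by linarith)
    have hp1 : p - 1 ≠ 0 := by linarith
    have i1 : ∫ θ in (0:ℝ)..π, (u + |θ|) ^ (-p) = u ^ (1-p) / (p-1) - (u + π) ^ (1 - p) / (p - 1) := by
      rw [intervalIntegral.integral_eq_sub_of_hasDerivAt (f := fun θ => - (u + θ) ^ (1-p) / (p-1)) _ (hc.intervalIntegrable _ _)]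
      · simp; ring
      · intro t ht
        rw [uIcc_of_le hpi.le] at ht
        rw [abs_of_nonneg ht.1]
        have h0 : u + t ≠ 0 := by linarith [ht.1]
        have := ((((hasDerivAt_id t).const_add u).rpow_const (p := 1 - p) (Or.inl h0)).neg).div_const (p-1)
        convert! this using 1
        rw [show 1 - p - 1 = -p by ring]
        simp only [id]
        field_simp; ring
    have i2 : ∫ θ in (-π)..0, (u + |θ|) ^ (-p) = u ^ (1-p) / (p-1) - (u + π) ^ (1 - p) / (p - 1) := by
      rw [← i1]
      have := intervalIntegral.integral_comp_neg (a := 0) (b := π) (fun θ : ℝ => (u + |θ|) ^ (-p))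
      simpa using this.symm
    rw [i1, i2]
    have : 2 / (p - 1) * u ^ (1 - p) = 2 * (u ^ (1-p) / (p-1)) := by ring
    linarith
  · exact (intervalIntegrable_iff_integrableOn_Ioc_of_le (by linarith)).1 (hc.intervalIntegrable _ _)
  · exact ae_of_all _ fun θ => by have := hpos θ; positivity

lemma rad_int {ρ p : ℝ} (h0 : 0 ≤ ρ) (h1 : ρ < 1) (hp : 1 < p) :
    ∫⁻ r in Ioo 0 1, ENNReal.ofReal ((1 - r) ^ (p - 2) * (1 - ρ * r) ^ (1 - p)) ≤
      ENNReal.ofReal (Real.log (2 / (1 - ρ ^ 2))) + ENNReal.ofReal (1 / (p - 1)) := by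
  have hsub : Ioo (0:ℝ) 1 ⊆ Ioc 0 ρ ∪ Ioc ρ 1 := by
    intro x hx
    by_cases h : x ≤ ρ
    · exact Or.inl ⟨hx.1, h⟩
    · exact Or.inr ⟨not_le.1 h, hx.2.le⟩
  refine (lintegral_mono_set hsub).trans ((lintegral_union_le _ _ _).trans (add_le_add ?_ ?_))
  · rw [← restrict_Ioo_eq_restrict_Ioc]
    refine le_trans ?_ (log_int le_rfl h0 h1)
    apply setLIntegral_mono' measurableSet_Ioo
    intro r hr
    apply ENNReal.ofReal_le_ofReal
    have hr1 : 0 < 1 - r := by linarith [hr.2]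
    have : (1 - ρ * r) ^ (1 - p) ≤ (1 - r) ^ (1 - p) :=
      Real.rpow_le_rpow_of_nonpos hr1 (by nlinarith [hr.1]) (by linarith)
    calc _ ≤ (1 - r) ^ (p - 2) * (1 - r) ^ (1 - p) := by gcongr
      _ = _ := by rw [← Real.rpow_add hr1, ← Real.rpow_neg_one]; congr 1; ring
  · have hd : 0 < 1 - ρ := by linarith
    calc _ ≤ ∫⁻ r in Ioc ρ 1, ENNReal.ofReal ((1 - r) ^ (p - 2) * (1 - ρ) ^ (1 - p)) := by
          apply setLIntegral_mono' measurableSet_Ioc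
          intro r hr
          apply ENNReal.ofReal_le_ofReal
          have hr1 : 0 ≤ 1 - r := by linarith [hr.2]
          have : (1 - ρ * r) ^ (1 - p) ≤ (1 - ρ) ^ (1 - p) :=
            Real.rpow_le_rpow_of_nonpos hd (by nlinarith [hr.2]) (by linarith)
          gcongr
      _ = _ := by
          have hi : IntervalIntegrable (fun r : ℝ => (1 - r) ^ (p - 2)) volume ρ 1 := by
            have := (intervalIntegral.intervalIntegrable_rpow' (a := 1 - ρ) (b := 0) (r := p - 2) (by linarith)).comp_sub_left 1
            simpa using this
          rw [← ofReal_integral_eq_lintegral_ofReal]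
          · rw [← intervalIntegral.integral_of_le h1.le, intervalIntegral.integral_mul_const,
              intervalIntegral.integral_comp_sub_left (fun x => x ^ (p-2)), integral_rpow (Or.inl (by linarith))]
            congr 1
            rw [sub_self, Real.zero_rpow (by linarith), sub_zero, div_mul_eq_mul_div, ← Real.rpow_add hd]
            rw [show p - 2 + 1 + (1 - p) = 0 by ring, Real.rpow_zero]; congr 1; ring
          · exact (intervalIntegrable_iff_integrableOn_Ioc_of_le h1.le).1 (hi.mul_const _)
          · filter_upwards [ae_restrict_mem measurableSet_Ioc] with r hr
            have hr1 : 0 ≤ 1 - r := by linarith [hr.2]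
            positivity

lemma test_real {ρ p : ℝ} (h0 : 0 ≤ ρ) (h1 : ρ < 1) (hp : 1 < p) :
    ∫⁻ z in ball (0:ℂ) 1, ENNReal.ofReal ((1 - ‖z‖) ^ (p - 2) * ‖1 - ρ * z‖ ^ (-p)) ≤
      ENNReal.ofReal (5 ^ p * (2 / (p - 1))) * (ENNReal.ofReal (Real.log (2 / (1 - ρ ^ 2))) + ENNReal.ofReal (1 / (p - 1))) := by
  rw [polar_ball (by fun_prop)]
  calc _ ≤ ∫⁻ r in Ioo 0 1, ENNReal.ofReal (5 ^ p * (2 / (p - 1))) * ENNReal.ofReal ((1 - r) ^ (p - 2) * (1 - ρ * r) ^ (1 - p)) := by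
        apply setLIntegral_mono' measurableSet_Ioo
        intro r hr
        have hr1 : 0 < 1 - r := by linarith [hr.2]
        have hx0 : 0 ≤ ρ * r := mul_nonneg h0 hr.1.le
        have hx1 : ρ * r < 1 := by nlinarith [hr.1, hr.2]
        calc _ ≤ 1 * ∫⁻ θ in Ioo (-π) π, ENNReal.ofReal ((1 - r) ^ (p - 2) * 5 ^ p) * ENNReal.ofReal ((1 - ρ * r + |θ|) ^ (-p)) := by
              gcongr ?_ * ?_
              · rw [← ENNReal.ofReal_one]; exact ENNReal.ofReal_le_ofReal hr.2.le
              · apply setLIntegral_mono' measurableSet_Ioo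
                intro θ hθ
                have hn := Complex.norm_polarCoord_symm (r, θ)
                rw [Complex.polarCoord_symm_apply, abs_of_pos hr.1] at hn
                simp only at hn
                rw [hn, ← ENNReal.ofReal_mul (by positivity)]
                apply ENNReal.ofReal_le_ofReal
                have hl := norm_lower hx0 hx1 (abs_le.2 ⟨hθ.1.le, hθ.2.le⟩)
                rw [← mul_assoc, ← ofReal_mul]
                set N := ‖(1:ℂ) - (ρ * r : ℝ) * (Real.cos θ + Real.sin θ * Complex.I)‖
                have hpos : 0 < 1 - ρ * r + |θ| := by have := abs_nonneg θ; linarith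
                have hN0 : 0 < N := by linarith
                have := Real.rpow_le_rpow_of_nonpos hpos hl (z := -p) (by linarith)
                rw [Real.mul_rpow (by norm_num) hN0.le] at this
                rw [mul_assoc]
                gcongr
                calc N ^ (-p) = 5 ^ p * (5 ^ (-p) * N ^ (-p)) := by
                      rw [← mul_assoc, ← Real.rpow_add (by norm_num)]; simp
                  _ ≤ _ := by gcongr
          _ ≤ _ := by
              rw [one_mul, lintegral_const_mul' _ _ ENNReal.ofReal_ne_top]
              refine (mul_le_mul_right (theta_int (u := 1 - ρ * r) (by linarith) hp) _).trans (le_of_eq ?_)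
              have : 0 < p - 1 := by linarith
              rw [← ENNReal.ofReal_mul (by positivity), ← ENNReal.ofReal_mul (by positivity)]
              congr 1; ring
    _ ≤ _ := by
        rw [lintegral_const_mul' _ _ ENNReal.ofReal_ne_top]
        gcongr
        exact rad_int h0 h1 hp

lemma test_int {a : ℂ} {p : ℝ} (ha : ‖a‖ < 1) (hp : 1 < p) :
    ∫⁻ z in ball (0:ℂ) 1, ENNReal.ofReal ((1 - ‖z‖) ^ (p - 2) * ‖1 - a * z‖ ^ (-p)) ≤
      ENNReal.ofReal (5 ^ p * (2 / (p - 1)) * (1 + 1 / ((p - 1) * Real.log 2))) *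
        ENNReal.ofReal (Real.log (2 / (1 - ‖a‖ ^ 2))) := by
  have hl := lam_pos ha
  have hl2 := Real.log_pos one_lt_two
  have hp1 : 0 < p - 1 := by linarith
  obtain ⟨c, hc⟩ : ∃ c : Circle, a = ‖a‖ * c := by
    refine ⟨Circle.exp (Complex.arg a), ?_⟩
    rw [Circle.coe_exp, Complex.norm_mul_exp_arg_mul_I]
  have hrot : ∫⁻ z in ball (0:ℂ) 1, ENNReal.ofReal ((1 - ‖z‖) ^ (p - 2) * ‖1 - a * z‖ ^ (-p)) =
      ∫⁻ z in ball (0:ℂ) 1, ENNReal.ofReal ((1 - ‖z‖) ^ (p - 2) * ‖1 - ‖a‖ * z‖ ^ (-p)) := by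
    have := ((rotation c).measurePreserving).setLIntegral_comp_preimage_emb
      (rotation c).toHomeomorph.measurableEmbedding
      (fun z => ENNReal.ofReal ((1 - ‖z‖) ^ (p - 2) * ‖1 - ‖a‖ * z‖ ^ (-p))) (ball (0:ℂ) 1)
    rw [← this]
    have hpre : (rotation c) ⁻¹' ball (0:ℂ) 1 = ball (0:ℂ) 1 := by
      ext x; rw [mem_preimage, mem_ball, mem_ball, dist_zero_right, dist_zero_right, LinearIsometryEquiv.norm_map]
    rw [hpre]
    apply lintegral_congr
    intro z
    rw [LinearIsometryEquiv.norm_map, rotation_apply, ← mul_assoc, ← hc]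
  rw [hrot]
  refine (test_real (norm_nonneg a) ha hp).trans ?_
  have hl3 : 0 < Real.log (2 / (1 - ‖a‖ ^ 2)) := by linarith
  rw [← ENNReal.ofReal_add hl3.le (by positivity), ← ENNReal.ofReal_mul (by positivity),
    ← ENNReal.ofReal_mul (by positivity)]
  apply ENNReal.ofReal_le_ofReal
  rw [mul_assoc (5 ^ p * (2 / (p - 1)))]
  gcongr
  rw [add_mul, one_mul]
  gcongr
  rw [div_mul_eq_mul_div, div_le_div_iff₀ (by positivity) (by positivity)]
  nlinarith


lemma tsum_holder {p : ℝ} (hp : 1 ≤ p) (w f : ℕ → ENNReal) :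
    (∑' k, w k * f k) ^ p ≤ (∑' k, w k) ^ (p - 1) * ∑' k, w k * f k ^ p := by
  have hp0 : 0 < p := by linarith
  have h : ∑' k, w k * f k ≤ (∑' k, w k) ^ (1 - p⁻¹) * (∑' k, w k * f k ^ p) ^ p⁻¹ := by
    rw [ENNReal.tsum_eq_iSup_sum]
    refine iSup_le fun s => ?_
    refine (ENNReal.inner_le_weight_mul_Lp_of_nonneg s hp w f).trans ?_
    have h1 : 0 ≤ 1 - p⁻¹ := sub_nonneg.2 (inv_le_one_of_one_le₀ hp)
    gcongr <;> exact ENNReal.sum_le_tsum s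
  calc _ ≤ ((∑' k, w k) ^ (1 - p⁻¹) * (∑' k, w k * f k ^ p) ^ p⁻¹) ^ p := by gcongr
    _ = _ := by
      rw [ENNReal.mul_rpow_of_nonneg _ _ hp0.le, ← ENNReal.rpow_mul, ← ENNReal.rpow_mul,
        inv_mul_cancel₀ hp0.ne', ENNReal.rpow_one]
      congr 2; field_simp

lemma sum_hol {f : ℕ → ℂ → ℂ} (hf : ∀ k, HolOn (f k))
    (hloc : ∀ r < 1, ∃ B : ℝ, ∀ k, ∀ z ∈ ball (0:ℂ) r, ‖f k z‖ ≤ B)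
    {c : ℕ → ℂ} (hc : Summable fun k => ‖c k‖) :
    HolOn (fun z => ∑' k, c k * f k z) ∧ ∀ z ∈ ball (0:ℂ) 1,
      HasSum (fun k => c k * deriv (f k) z) (deriv (fun z => ∑' k, c k * f k z) z) := by
  have key : ∀ z ∈ ball (0:ℂ) 1, DifferentiableAt ℂ (fun z => ∑' k, c k * f k z) z ∧
      HasSum (fun k => c k * deriv (f k) z) (deriv (fun z => ∑' k, c k * f k z) z) := by
    intro z hz
    rw [mem_ball, dist_zero_right] at hz
    obtain ⟨r, hr, hr1⟩ := exists_between hz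
    obtain ⟨B, hB⟩ := hloc r hr1
    have hsub : ball (0:ℂ) r ⊆ ball 0 1 := ball_subset_ball hr1.le
    have hzr : z ∈ ball (0:ℂ) r := by rwa [mem_ball, dist_zero_right]
    have hu : Summable fun k => ‖c k‖ * B := hc.mul_right B
    have hd : ∀ k, DifferentiableOn ℂ (fun z => c k * f k z) (ball 0 r) := fun k =>
      ((hf k).mono hsub).const_mul (c k)
    have hle : ∀ (k : ℕ) (w : ℂ), w ∈ ball (0:ℂ) r → ‖c k * f k w‖ ≤ ‖c k‖ * B := by
      intro k w hw
      rw [norm_mul]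
      exact mul_le_mul_of_nonneg_left (hB k w hw) (norm_nonneg _)
    refine ⟨(differentiableOn_tsum_of_summable_norm hu hd isOpen_ball hle).differentiableAt
      (isOpen_ball.mem_nhds hzr), ?_⟩
    have := hasSum_deriv_of_summable_norm hu hd isOpen_ball hle hzr
    convert! this using 2 with k
    rw [deriv_const_mul _ (((hf k).mono hsub).differentiableAt (isOpen_ball.mem_nhds hzr))]
  exact ⟨fun z hz => (key z hz).1.differentiableWithinAt, fun z hz => (key z hz).2⟩

lemma sum_Besov {p : ℝ} (hp : 1 < p) {f : ℕ → ℂ → ℂ} {K : ENNReal} (hK : K ≠ ⊤)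
    (hf : ∀ k, HolOn (f k))
    (hloc : ∀ r < 1, ∃ B : ℝ, ∀ k, ∀ z ∈ ball (0:ℂ) r, ‖f k z‖ ≤ B)
    (hw : ∀ k, ∫⁻ z in ball (0:ℂ) 1, Wt p (f k) z ≤ K)
    {c : ℕ → ℂ} (hc : Summable fun k => ‖c k‖) :
    (fun z => ∑' k, c k * f k z) ∈ Besov p := by
  obtain ⟨h1, h2⟩ := sum_hol hf hloc hc
  have hp0 : 0 < p := by linarith
  have hcs : ∑' k, ‖c k‖ₑ ≠ ⊤ := by
    have := hc.tsum_ofReal_ne_top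
    simpa [ofReal_norm] using this
  rw [Besov_wt]
  refine ⟨h1, ?_⟩
  have hW : ∀ (F : ℂ → ℂ) (z : ℂ), z ∈ ball (0:ℂ) 1 → Wt p F z = ENNReal.ofReal ((1 - ‖z‖) ^ (p - 2)) * ‖deriv F z‖ₑ ^ p := by
    intro F z hz
    rw [mem_ball, dist_zero_right] at hz
    have : 0 < 1 - ‖z‖ := by linarith
    rw [Wt, ENNReal.ofReal_mul (by positivity), ← ENNReal.ofReal_rpow_of_nonneg (norm_nonneg _) hp0.le, ofReal_norm]
  have hbd : ∫⁻ z in ball (0:ℂ) 1, Wt p (fun z => ∑' k, c k * f k z) z ≤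
      (∑' k, ‖c k‖ₑ) ^ (p - 1) * ((∑' k, ‖c k‖ₑ) * K) := by
    calc _ ≤ ∫⁻ z in ball (0:ℂ) 1, (∑' k, ‖c k‖ₑ) ^ (p - 1) * ∑' k, ‖c k‖ₑ * Wt p (f k) z := by
          apply setLIntegral_mono' measurableSet_ball
          intro z hz
          have hs := h2 z hz
          have e1 : ‖deriv (fun z => ∑' k, c k * f k z) z‖ₑ ≤ ∑' k, ‖c k‖ₑ * ‖deriv (f k) z‖ₑ := by
            rw [← hs.tsum_eq]
            refine enorm_tsum_le_tsum_enorm.trans (le_of_eq ?_)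
            simp_rw [enorm_mul]
          rw [hW _ z hz]
          calc _ ≤ ENNReal.ofReal ((1 - ‖z‖) ^ (p - 2)) * (∑' k, ‖c k‖ₑ * ‖deriv (f k) z‖ₑ) ^ p := by gcongr
            _ ≤ ENNReal.ofReal ((1 - ‖z‖) ^ (p - 2)) * ((∑' k, ‖c k‖ₑ) ^ (p - 1) * ∑' k, ‖c k‖ₑ * ‖deriv (f k) z‖ₑ ^ p) := by
                gcongr; exact tsum_holder hp.le _ _
            _ = _ := by
                rw [mul_left_comm, ← ENNReal.tsum_mul_left]
                congr 2; ext k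
                rw [hW _ z hz]; ring
      _ = (∑' k, ‖c k‖ₑ) ^ (p - 1) * ∑' k, ‖c k‖ₑ * ∫⁻ z in ball (0:ℂ) 1, Wt p (f k) z := by
          rw [lintegral_const_mul' _ _ (ENNReal.rpow_ne_top_of_nonneg (by linarith) hcs), lintegral_tsum]
          · congr 2; ext k
            rw [lintegral_const_mul' _ _ enorm_ne_top]
          · intro k
            have := measurable_deriv (f k)
            unfold Wt
            fun_prop
      _ ≤ _ := by
          rw [← ENNReal.tsum_mul_right]
          gcongr with k
          exact hw k
  exact ne_top_of_le_ne_top (ENNReal.mul_ne_top (ENNReal.rpow_ne_top_of_nonneg (by linarith) hcs) (ENNReal.mul_ne_top hcs hK)) hbd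


lemma bs_diag {M : ℕ → ℕ → ℂ} (hM : ∀ n, ∃ B : ℝ, ∀ k, ‖M n k‖ ≤ B)
    (h : ∀ c : ℕ → ℂ, (Summable fun k => ‖c k‖) → ∃ C : ℝ, ∀ n, ‖∑' k, c k * M n k‖ ≤ C) :
    ∃ C : ℝ, ∀ n, ‖M n n‖ ≤ C := by
  choose B hB using hM
  have hs : ∀ c : lp (fun _ : ℕ => ℂ) 1, HasSum (fun k => ‖c k‖) ‖c‖ := by
    intro c
    have := lp.hasSum_norm (p := 1) (by simp) c
    simpa using this
  have hsn : ∀ n (c : lp (fun _ : ℕ => ℂ) 1), Summable fun k => ‖c k * M n k‖ := by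
    intro n c
    refine Summable.of_nonneg_of_le (fun k => norm_nonneg _) (fun k => ?_) ((hs c).summable.mul_right (B n))
    rw [norm_mul]
    exact mul_le_mul_of_nonneg_left (hB n k) (norm_nonneg _)
  let Λ : ℕ → (lp (fun _ : ℕ => ℂ) 1 →L[ℂ] ℂ) := fun n =>
    LinearMap.mkContinuous
      { toFun := fun c => ∑' k, c k * M n k
        map_add' := by
          intro c d
          rw [← (hsn n c).of_norm.tsum_add (hsn n d).of_norm]
          congr 1; ext k
          simp [add_mul]
        map_smul' := by
          intro t c
          simp only [RingHom.id_apply, smul_eq_mul]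
          rw [← tsum_mul_left]
          congr 1; ext k
          simp [mul_assoc] } (B n) (by
        intro c
        simp only [LinearMap.coe_mk, AddHom.coe_mk]
        refine (norm_tsum_le_tsum_norm (hsn n c)).trans ?_
        rw [mul_comm, ← (hs c).tsum_eq, ← tsum_mul_right]
        refine (hsn n c).tsum_le_tsum (fun k => ?_) ((hs c).summable.mul_right (B n))
        rw [norm_mul]
        exact mul_le_mul_of_nonneg_left (hB n k) (norm_nonneg _))
  have hΛ : ∀ n c, Λ n c = ∑' k, c k * M n k := fun n c => rfl
  obtain ⟨C, hC⟩ := banach_steinhaus (g := Λ) (by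
    intro c
    obtain ⟨C, hC⟩ := h c (hs c).summable
    exact ⟨C, fun n => by rw [hΛ]; exact hC n⟩)
  refine ⟨C, fun n => ?_⟩
  have h1 := (Λ n).le_opNorm (lp.single 1 n 1)
  rw [lp.norm_single (by simp), norm_one, mul_one, hΛ, tsum_eq_single n] at h1
  · simp only [lp.single_apply, Pi.single_eq_same, one_mul] at h1
    exact h1.trans (hC n)
  · intro k hk
    simp [lp.single_apply, Pi.single_eq_of_ne hk]

/-- The test functions. -/
noncomputable def tf (p : ℝ) (a : ℂ) (z : ℂ) : ℂ :=
  (((Real.log (2 / (1 - ‖a‖ ^ 2))) ^ (-(1 / p)) : ℝ) : ℂ) *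
    ((Real.log 2 : ℝ) - Complex.log (1 + (-((starRingEnd ℂ) a * z))))

lemma norm_cz {a z : ℂ} {r : ℝ} (ha : ‖a‖ < 1) (hz : ‖z‖ ≤ r) : ‖-((starRingEnd ℂ) a * z)‖ ≤ r := by
  rw [norm_neg, norm_mul, RCLike.norm_conj]
  nlinarith [norm_nonneg a, norm_nonneg z]

lemma tf_deriv (p : ℝ) {a z : ℂ} (ha : ‖a‖ < 1) (hz : ‖z‖ < 1) :
    HasDerivAt (tf p a) ((((Real.log (2 / (1 - ‖a‖ ^ 2))) ^ (-(1 / p)) : ℝ) : ℂ) *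
      ((starRingEnd ℂ) a / (1 - (starRingEnd ℂ) a * z))) z := by
  have hs : 1 + (-((starRingEnd ℂ) a * z)) ∈ Complex.slitPlane :=
    Complex.mem_slitPlane_of_norm_lt_one ((norm_cz ha le_rfl).trans_lt hz)
  have h1 : HasDerivAt (fun z : ℂ => 1 + (-((starRingEnd ℂ) a * z))) (-((starRingEnd ℂ) a)) z := by
    simpa using (((hasDerivAt_id z).const_mul ((starRingEnd ℂ) a)).neg).const_add 1
  have h2 := ((h1.clog hs).const_sub (((Real.log 2 : ℝ)):ℂ)).const_mul
    ((((Real.log (2 / (1 - ‖a‖ ^ 2))) ^ (-(1 / p)) : ℝ) : ℂ))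
  convert! h2 using 1
  rw [← sub_eq_add_neg]; ring

lemma tf_hol (p : ℝ) {a : ℂ} (ha : ‖a‖ < 1) : HolOn (tf p a) := by
  intro z hz
  rw [mem_ball, dist_zero_right] at hz
  exact (tf_deriv p ha hz).differentiableAt.differentiableWithinAt

lemma tf_self {p : ℝ} {a : ℂ} (ha : ‖a‖ < 1) :
    tf p a a = (((Real.log (2 / (1 - ‖a‖ ^ 2))) ^ (1 - 1 / p) : ℝ) : ℂ) := by
  have hd : 0 < 1 - ‖a‖ ^ 2 := by nlinarith [norm_nonneg a]
  have hl := lam_pos ha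
  have hl2 := Real.log_pos one_lt_two
  have e : (1:ℂ) + (-((starRingEnd ℂ) a * a)) = ((1 - ‖a‖ ^ 2 : ℝ) : ℂ) := by
    rw [mul_comm, Complex.mul_conj, Complex.normSq_eq_norm_sq]; push_cast; ring
  rw [tf, e, ← Complex.ofReal_log hd.le, ← Complex.ofReal_sub, ← Real.log_div (by norm_num) hd.ne',
    ← Complex.ofReal_mul]
  congr 1
  rw [sub_eq_add_neg 1 (1 / p), Real.rpow_add (by linarith), Real.rpow_one, mul_comm]

lemma tf_loc {p : ℝ} (hp : 1 < p) {r : ℝ} (hr : r < 1) :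
    ∃ B : ℝ, ∀ a : ℂ, ‖a‖ < 1 → ∀ z : ℂ, ‖z‖ < r → ‖tf p a z‖ ≤ B := by
  have hl2 := Real.log_pos one_lt_two
  refine ⟨(Real.log 2) ^ (-(1 / p)) * (Real.log 2 + (1 ^ 2 * (1 - r)⁻¹ / 2 + 1)), fun a ha z hz => ?_⟩
  have hl := lam_pos ha
  have hn := norm_cz ha hz.le
  have hlog := Complex.norm_log_one_add_le (hn.trans_lt hr)
  have hp1 : -(1 / p) ≤ 0 := by have : 0 < p := by linarith
                                simp [this.le]
  rw [tf, norm_mul, Complex.norm_real, Real.norm_of_nonneg (Real.rpow_nonneg (by linarith) _)]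
  refine mul_le_mul ?_ ?_ (norm_nonneg _) (Real.rpow_nonneg hl2.le _)
  · exact Real.rpow_le_rpow_of_nonpos hl2 hl hp1
  · refine (norm_sub_le _ _).trans ?_
    rw [Complex.norm_real, Real.norm_of_nonneg hl2.le]
    gcongr
    refine hlog.trans ?_
    have : 0 < 1 - r := by linarith
    have h7 : 0 ≤ (1 - ‖-((starRingEnd ℂ) a * z)‖)⁻¹ := inv_nonneg.2 (by linarith)
    gcongr <;> linarith

lemma tf_wt {p : ℝ} (hp : 1 < p) {a : ℂ} (ha : ‖a‖ < 1) :
    ∫⁻ z in ball (0:ℂ) 1, Wt p (tf p a) z ≤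
      ENNReal.ofReal (5 ^ p * (2 / (p - 1)) * (1 + 1 / ((p - 1) * Real.log 2))) := by
  have hl := lam_pos ha
  have hl2 := Real.log_pos one_lt_two
  have hp0 : 0 < p := by linarith
  set l := Real.log (2 / (1 - ‖a‖ ^ 2)) with hldef
  have hl0 : 0 < l := by linarith
  calc _ ≤ ∫⁻ z in ball (0:ℂ) 1, ENNReal.ofReal (l⁻¹) *
        ENNReal.ofReal ((1 - ‖z‖) ^ (p - 2) * ‖1 - (starRingEnd ℂ) a * z‖ ^ (-p)) := by
        apply setLIntegral_mono' measurableSet_ball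
        intro z hz
        rw [mem_ball, dist_zero_right] at hz
        have hd : 0 < 1 - ‖z‖ := by linarith
        rw [Wt, (tf_deriv p ha hz).deriv, ← ENNReal.ofReal_mul (by positivity)]
        apply ENNReal.ofReal_le_ofReal
        rw [← hldef, norm_mul, Complex.norm_real, Real.norm_of_nonneg (Real.rpow_nonneg hl0.le _),
          norm_div, RCLike.norm_conj, Real.mul_rpow (Real.rpow_nonneg hl0.le _) (by positivity),
          ← Real.rpow_mul hl0.le, show -(1 / p) * p = -1 by field_simp, Real.rpow_neg_one, mul_left_comm]
        rw [Real.div_rpow (norm_nonneg _) (norm_nonneg _), Real.rpow_neg (norm_nonneg _), div_eq_mul_inv]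
        have : ‖a‖ ^ p ≤ 1 := Real.rpow_le_one (norm_nonneg _) ha.le hp0.le
        gcongr
        exact mul_le_of_le_one_left (by positivity) this
    _ ≤ _ := by
        rw [lintegral_const_mul' _ _ ENNReal.ofReal_ne_top]
        have := test_int (a := (starRingEnd ℂ) a) (by rwa [RCLike.norm_conj]) hp
        rw [RCLike.norm_conj, ← hldef] at this
        refine (mul_le_mul_right this _).trans (le_of_eq ?_)
        rw [mul_left_comm, ← ENNReal.ofReal_mul (by positivity), inv_mul_cancel₀ hl0.ne', ENNReal.ofReal_one, mul_one]

lemma a_to_b {p q : ℝ} {g : ℂ → ℂ} (hpq : p.HolderConjugate q) (hg : HolOn g)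
    (h : MapsInto (Tg g) (Besov p) Bloch) : g ∈ BlochLog (1 / q) := by
  have hp : 1 < p := hpq.lt
  have hq : 1 / q = 1 - 1 / p := by
    have := (Real.holderConjugate_iff.1 hpq).2
    rw [one_div, one_div]; linarith
  by_contra hcon
  have h1 : ∀ n : ℕ, ∃ a ∈ ball (0:ℂ) 1, (n:ℝ) < (1 - ‖a‖ ^ 2) * (Real.log (2 / (1 - ‖a‖ ^ 2))) ^ (1 / q) *
        ‖deriv g a‖ := by
    intro n
    by_contra! hn
    exact hcon ⟨hg, n, hn⟩
  choose a ha hbig using h1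
  have ha1 : ∀ n, ‖a n‖ < 1 := fun n => by simpa using ha n
  have hd : ∀ n, 0 < 1 - ‖a n‖ ^ 2 := fun n => by nlinarith [norm_nonneg (a n), ha1 n]
  have hf : ∀ k, HolOn (tf p (a k)) := fun k => tf_hol p (ha1 k)
  have hloc : ∀ r < 1, ∃ B : ℝ, ∀ k, ∀ z ∈ ball (0:ℂ) r, ‖tf p (a k) z‖ ≤ B := by
    intro r hr
    obtain ⟨B, hB⟩ := tf_loc hp hr
    exact ⟨B, fun k z hz => hB (a k) (ha1 k) z (by simpa using hz)⟩
  let M : ℕ → ℕ → ℂ := fun n k => ((1 - ‖a n‖ ^ 2 : ℝ) : ℂ) * deriv g (a n) * tf p (a k) (a n)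
  obtain ⟨C, hC⟩ := bs_diag (M := M) (by
    intro n
    obtain ⟨r, hr, hr1⟩ := exists_between (ha1 n)
    obtain ⟨B, hB⟩ := hloc r hr1
    refine ⟨‖((1 - ‖a n‖ ^ 2 : ℝ) : ℂ) * deriv g (a n)‖ * B, fun k => ?_⟩
    simp only [M]
    rw [norm_mul]
    exact mul_le_mul_of_nonneg_left (hB k _ (by simpa using hr)) (norm_nonneg _)) (by
    intro c hc
    have hF := sum_Besov hp ENNReal.ofReal_ne_top hf hloc (fun k => tf_wt hp (ha1 k)) hc
    obtain ⟨-, C, hC⟩ := h _ hF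
    refine ⟨C, fun n => ?_⟩
    have h2 := hC (a n) (ha n)
    rw [(Tg_spec hg hF.1).2 _ (ha n)] at h2
    refine le_trans (le_of_eq ?_) h2
    have : ∑' k, c k * M n k = ((1 - ‖a n‖ ^ 2 : ℝ) : ℂ) * (deriv g (a n) * ∑' k, c k * tf p (a k) (a n)) := by
      rw [← mul_assoc, ← tsum_mul_left]
      congr 1; ext k; simp only [M]; ring
    rw [this, norm_mul, Complex.norm_real, Real.norm_of_nonneg (hd n).le])
  obtain ⟨n, hn⟩ := exists_nat_gt C
  have h3 := hC n
  have h4 := hbig n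
  have hl := lam_pos (ha1 n)
  have hl2 := Real.log_pos one_lt_two
  simp only [M] at h3
  rw [tf_self (ha1 n), norm_mul, norm_mul, Complex.norm_real, Complex.norm_real,
    Real.norm_of_nonneg (hd n).le, Real.norm_of_nonneg (Real.rpow_nonneg (by linarith) _), ← hq] at h3
  linarith

/-- For `1 < p < ∞` with conjugate exponent `p'` and `g` holomorphic on the
unit disc, the following are equivalent: (a) `T_g` maps `Bᵖ` into the Bloch space;
(b) `g ∈ 𝓑_{log,1/p'}`; (c) `T_g` maps `Bᵖ` into the little Bloch space. -/
theorem stmt4 (p p' : ℝ) (hp : 1 < p) (hpp' : 1 / p + 1 / p' = 1)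
    (g : ℂ → ℂ) (hg : HolOn g) :
    (MapsInto (Tg g) (Besov p) Bloch ↔ g ∈ BlochLog (1 / p')) ∧
    (g ∈ BlochLog (1 / p') ↔ MapsInto (Tg g) (Besov p) littleBloch) := by
  have hpq : p.HolderConjugate p' := by
    rw [Real.holderConjugate_iff]
    exact ⟨hp, by simpa only [one_div] using hpp'⟩
  have hab := fun h => a_to_b hpq hg h
  have hbc : g ∈ BlochLog (1 / p') → MapsInto (Tg g) (Besov p) littleBloch :=
    fun h f hf => b_to_c hpq h hf
  have hca : MapsInto (Tg g) (Besov p) littleBloch → MapsInto (Tg g) (Besov p) Bloch :=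
    fun h f hf => littleBloch_sub (h f hf)
  exact ⟨⟨hab, fun h => hca (hbc h)⟩, ⟨hbc, fun h => hab (hca h)⟩⟩
end
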